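/- arXiv:math/9507205 — 2 statements merged into one kernel-verified Lean document; each statement's English description precedes it below -/
import Mathlib

section
/- Let n ≥ 2 be an integer and let Γ be the subgroup of PL_n(ℝ) generated by the translations x ↦ x + a with a ∈ Δ_n ∩ (−1/2, 1/2) together with the elements of BPL_n(ℝ) whose support is contained in the open interval (0, 1). Then Γ contains BPL_n(ℝ). -/
/-!
The proof is a fragmentation argument. Since `φₙ(n) = 1`, the group `Δₙ` is stable under division
by `n`; hence every translation by an element of `Δₙ` is a power of a short one and lies in `Γ`
(`translation_mem`). As `Δₙ` is dense, conjugating by these translations shows that `Γ` contains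
every element of `PLₙ(ℝ)` supported in an interval of length less than `1` (`small_mem`).

If `f` in `BPLₙ(ℝ)` and `p ∈ ℤ[1/n]`, then `f p - p ∈ Δₙ`: this holds near infinity, and
`φₙ(f x) - φₙ(x)` is constant along `ℤ[1/n]` on each affine piece because all slopes are powers
of `n` (`phi_preserved`). A displacement in `Δₙ` is a multiple of `(n - 1) n⁻ᴷ` for large `K`, and
one such step is realized by an explicit map with slopes `n` and `1/n` and small support
(`exists_bump`). So if `f` is supported in `(A, B) ∋ p`, some `h ∈ Γ`
supported in `(A, B)` satisfies `h p = f p` (`move`). Then `h⁻¹ f` fixes `p` and splits as a product of a map supported to the left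
of `p` and one supported to the right (`MemPL.cut`). Cutting at successive points of `(1/n) ℤ`
reduces any `f` to maps with small support (`frag`).
-/

noncomputable section

/-- `ℤ[1/n]` realized as a subset of `ℝ`: all reals of the form `a * n^b` with `a b : ℤ`. -/
def zpows (n : ℕ) : Set ℝ := {x : ℝ | ∃ a b : ℤ, x = (a : ℝ) * (n : ℝ) ^ b}

/-- The defining properties of the (unique) ring homomorphism `φₙ : ℤ[1/n] → ℤ/(n-1)ℤ`,
expressed for a function `φ : ℝ → ZMod (n-1)` restricted to the subset `zpows n`. -/
def IsPhi (n : ℕ) (φ : ℝ → ZMod (n - 1)) : Prop :=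
  (∀ x ∈ zpows n, ∀ y ∈ zpows n, φ (x + y) = φ x + φ y) ∧
  (∀ x ∈ zpows n, ∀ y ∈ zpows n, φ (x * y) = φ x * φ y) ∧
  φ 1 = 1

/-- `B` is a discrete subset of `ℝ`: every point of `ℝ` has a neighborhood containing
at most one point of `B`. -/
def LocDiscrete (B : Set ℝ) : Prop := ∀ x : ℝ, ∃ ε > 0, ∀ y ∈ B, |y - x| < ε → y = x

/-- Membership in `PLₙ(ℝ)`: an orientation-preserving homeomorphism of `ℝ`
(equivalently, a strictly monotone surjection), piecewise linear with breaks in a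
discrete subset of `ℤ[1/n]`, all slopes integral powers of `n`, and mapping `ℤ[1/n]`
into itself. -/
def MemPL (n : ℕ) (f : ℝ → ℝ) : Prop :=
  StrictMono f ∧ Function.Surjective f ∧
  (∃ B : Set ℝ, B ⊆ zpows n ∧ LocDiscrete B ∧
    ∀ x ∉ B, ∃ (k : ℤ) (c : ℝ), ∃ ε > 0, ∀ y : ℝ, |y - x| < ε → f y = (n : ℝ) ^ k * y + c) ∧
  (∀ q ∈ zpows n, f q ∈ zpows n)

/-- Membership in `BPLₙ(ℝ)`: elements of `PLₙ(ℝ)` with bounded support. -/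
def MemBPL (n : ℕ) (f : ℝ → ℝ) : Prop :=
  MemPL n f ∧ ∃ M : ℝ, ∀ x : ℝ, M < |x| → f x = x

/-- The generating set for `Γ`: translations `x ↦ x + a` with `a ∈ Δₙ ∩ (-1/2, 1/2)`,
together with elements of `BPLₙ(ℝ)` with support in `(0, 1)`. -/
def GammaGen (n : ℕ) (φ : ℝ → ZMod (n - 1)) : Set (Equiv.Perm ℝ) :=
  {f : Equiv.Perm ℝ |
    (∃ a : ℝ, a ∈ zpows n ∧ φ a = 0 ∧ a ∈ Set.Ioo (-(1/2) : ℝ) (1/2) ∧ ∀ x : ℝ, f x = x + a) ∨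
    (MemBPL n ⇑f ∧ ∀ x : ℝ, x ∉ Set.Ioo (0 : ℝ) 1 → f x = x)}


/-! ### The ring `ℤ[1/n]` -/

theorem zpows_intCast (n : ℕ) (a : ℤ) : (a : ℝ) ∈ zpows n := ⟨a, 0, by simp⟩

theorem zpows_zpow (n : ℕ) (k : ℤ) : (n : ℝ) ^ k ∈ zpows n := ⟨1, k, by simp⟩

theorem zpows_mul {n : ℕ} (hn : 2 ≤ n) {x y : ℝ} (hx : x ∈ zpows n) (hy : y ∈ zpows n) :
    x * y ∈ zpows n := by
  obtain ⟨a, b, rfl⟩ := hx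
  obtain ⟨c, d, rfl⟩ := hy
  have h0 : (n : ℝ) ≠ 0 := by positivity
  exact ⟨a * c, b + d, by rw [zpow_add₀ h0]; push_cast; ring⟩

theorem zpows_neg {n : ℕ} {x : ℝ} (hx : x ∈ zpows n) : -x ∈ zpows n := by
  obtain ⟨a, b, rfl⟩ := hx
  exact ⟨-a, b, by push_cast; ring⟩

theorem zpows_add {n : ℕ} (hn : 2 ≤ n) {x y : ℝ} (hx : x ∈ zpows n) (hy : y ∈ zpows n) :
    x + y ∈ zpows n := by
  have h0 : (n : ℝ) ≠ 0 := by positivity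
  have key : ∀ (a b c : ℤ) (m : ℕ),
      (a : ℝ) * (n : ℝ) ^ b + c * (n : ℝ) ^ (b + m) ∈ zpows n := by
    intro a b c m
    exact ⟨a + c * n ^ m, b, by rw [zpow_add₀ h0]; push_cast; rw [zpow_natCast]; ring⟩
  obtain ⟨a, b, rfl⟩ := hx
  obtain ⟨c, d, rfl⟩ := hy
  rcases le_total b d with h | h
  · obtain ⟨m, rfl⟩ := Int.le.dest h
    exact key a b c m
  · obtain ⟨m, rfl⟩ := Int.le.dest h
    rw [add_comm]
    exact key c d a m

theorem zpows_sub {n : ℕ} (hn : 2 ≤ n) {x y : ℝ} (hx : x ∈ zpows n) (hy : y ∈ zpows n) :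
    x - y ∈ zpows n := by
  rw [sub_eq_add_neg]
  exact zpows_add hn hx (zpows_neg hy)

theorem phi_zero {n : ℕ} {φ : ℝ → ZMod (n - 1)} (hφ : IsPhi n φ) : φ 0 = 0 := by
  have h0 : (0 : ℝ) ∈ zpows n := by simpa using zpows_intCast n 0
  simpa using hφ.1 0 h0 0 h0

theorem phi_neg {n : ℕ} {φ : ℝ → ZMod (n - 1)} (hφ : IsPhi n φ) {x : ℝ} (hx : x ∈ zpows n) :
    φ (-x) = -φ x := by
  have h := hφ.1 x hx (-x) (zpows_neg hx)
  rw [add_neg_cancel, phi_zero hφ] at h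
  exact (neg_eq_of_add_eq_zero_right h.symm).symm

theorem phi_sub {n : ℕ} {φ : ℝ → ZMod (n - 1)} (hφ : IsPhi n φ) {x y : ℝ}
    (hx : x ∈ zpows n) (hy : y ∈ zpows n) : φ (x - y) = φ x - φ y := by
  rw [sub_eq_add_neg, hφ.1 x hx (-y) (zpows_neg hy), phi_neg hφ hy, sub_eq_add_neg]

theorem phi_natCast {n : ℕ} {φ : ℝ → ZMod (n - 1)} (hφ : IsPhi n φ) (m : ℕ) :
    φ (m : ℝ) = m := by
  induction m with
  | zero => simpa using phi_zero hφ
  | succ m ih =>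
    have h1 : (1 : ℝ) ∈ zpows n := by simpa using zpows_intCast n 1
    push_cast
    rw [hφ.1 m (by simpa using zpows_intCast n m) 1 h1, ih, hφ.2.2]

theorem phi_intCast {n : ℕ} {φ : ℝ → ZMod (n - 1)} (hφ : IsPhi n φ) (m : ℤ) :
    φ (m : ℝ) = m := by
  obtain ⟨k, rfl | rfl⟩ := m.eq_nat_or_neg
  · simpa using phi_natCast hφ k
  · have hk : (k : ℝ) ∈ zpows n := by simpa using zpows_intCast n k
    push_cast
    rw [phi_neg hφ hk, phi_natCast hφ]

theorem phi_zpow {n : ℕ} (hn : 2 ≤ n) {φ : ℝ → ZMod (n - 1)} (hφ : IsPhi n φ) (k : ℤ) :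
    φ ((n : ℝ) ^ k) = 1 := by
  have h0 : (n : ℝ) ≠ 0 := by positivity
  have hn1 : (n : ZMod (n - 1)) = 1 := by
    have h : ((n - 1 + 1 : ℕ) : ZMod (n - 1)) = 1 := by
      rw [Nat.cast_add, ZMod.natCast_self]; simp
    rwa [Nat.sub_add_cancel (by omega)] at h
  have hnat : ∀ m : ℕ, φ ((n : ℝ) ^ (m : ℤ)) = 1 := by
    intro m
    have := phi_natCast hφ (n ^ m)
    push_cast at this
    rw [zpow_natCast, this, hn1, one_pow]
  obtain ⟨m, rfl | rfl⟩ := k.eq_nat_or_neg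
  · exact hnat m
  · have h := hφ.2.1 _ (zpows_zpow n m) _ (zpows_zpow n (-m))
    rw [← zpow_add₀ h0, add_neg_cancel, zpow_zero, hφ.2.2, hnat, one_mul] at h
    exact h.symm

theorem exists_zpow_lt {n : ℕ} (hn : 2 ≤ n) {ε : ℝ} (hε : 0 < ε) :
    ∃ K : ℕ, ∀ L : ℕ, K ≤ L → (n : ℝ) ^ (-(L : ℤ)) < ε := by
  have h2 : (2 : ℝ) ≤ n := by exact_mod_cast hn
  obtain ⟨K, hK⟩ := exists_pow_lt_of_lt_one hε
    (show ((n : ℝ))⁻¹ < 1 by rw [inv_lt_one₀ (by positivity)]; linarith)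
  refine ⟨K, fun L hL => lt_of_le_of_lt ?_ hK⟩
  rw [zpow_neg, zpow_natCast, ← inv_pow]
  exact pow_le_pow_of_le_one (by positivity) (inv_le_one_of_one_le₀ (by linarith)) hL

/-- `Δₙ` is dense in `ℝ`. -/
theorem delta_dense {n : ℕ} (hn : 2 ≤ n) {φ : ℝ → ZMod (n - 1)} (hφ : IsPhi n φ) {x y : ℝ}
    (hxy : x < y) : ∃ a ∈ zpows n, φ a = 0 ∧ x < a ∧ a < y := by
  have h2 : (2 : ℝ) ≤ n := by exact_mod_cast hn
  have hN : (0 : ℝ) < n - 1 := by linarith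
  obtain ⟨K, hK⟩ := exists_zpow_lt hn (ε := (y - x) / (n - 1)) (div_pos (by linarith) hN)
  have hK := hK K le_rfl
  rw [lt_div_iff₀ hN] at hK
  have hu : 0 < (n : ℝ) ^ (-(K : ℤ)) := by positivity
  set u := (n : ℝ) ^ (-(K : ℤ)) with hu'
  set w := u * (n - 1) with hw
  have hw0 : 0 < w := mul_pos hu hN
  set m : ℤ := ⌊x / w⌋ + 1 with hm
  have hcast : (m : ℝ) * w = ((m * (n - 1) : ℤ) : ℝ) * u := by rw [hw]; push_cast; ring
  refine ⟨m * w, ?_, ?_, ?_, ?_⟩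
  · rw [hcast]; exact zpows_mul hn (zpows_intCast _ _) (zpows_zpow _ _)
  · rw [hcast, hφ.2.1 _ (zpows_intCast _ _) _ (zpows_zpow _ _), phi_intCast hφ]
    have : (((n : ℤ) - 1 : ℤ) : ZMod (n - 1)) = 0 := by
      have : ((n : ℤ) - 1) = ((n - 1 : ℕ) : ℤ) := by omega
      rw [this, Int.cast_natCast, ZMod.natCast_self]
    rw [Int.cast_mul, this]; simp
  · have := Int.lt_floor_add_one (x / w)
    rw [div_lt_iff₀ hw0] at this
    rw [hm]; push_cast; exact this
  · have := Int.floor_le (x / w)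
    rw [le_div_iff₀ hw0] at this
    rw [hm]; push_cast; linarith

/-- A positive element of `Δₙ` is a positive multiple of `(n - 1) n⁻ᴷ` for all large `K`. -/
theorem delta_form {n : ℕ} (hn : 2 ≤ n) {φ : ℝ → ZMod (n - 1)} (hφ : IsPhi n φ) {δ : ℝ}
    (hδ : δ ∈ zpows n) (h0 : φ δ = 0) (hpos : 0 < δ) :
    ∃ K₀ : ℕ, ∀ K : ℕ, K₀ ≤ K → ∃ m : ℕ, δ = m * ((n - 1) * (n : ℝ) ^ (-(K : ℤ))) := by
  have hn0 : (n : ℝ) ≠ 0 := by positivity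
  have hnpos : (0 : ℝ) < n := by positivity
  have h2 : (2 : ℝ) ≤ n := by exact_mod_cast hn
  obtain ⟨a, b, rfl⟩ := hδ
  rw [hφ.2.1 _ (zpows_intCast _ _) _ (zpows_zpow _ _), phi_intCast hφ, phi_zpow hn hφ,
    mul_one, ZMod.intCast_zmod_eq_zero_iff_dvd] at h0
  obtain ⟨c, rfl⟩ := h0
  have hcast : ((n - 1 : ℕ) : ℝ) = n - 1 := by
    rw [Nat.cast_sub (by omega)]; simp
  have hc : 0 < c := by
    have h1 : (0 : ℝ) < (((n - 1 : ℕ) : ℤ) * c : ℤ) := pos_of_mul_pos_left hpos (by positivity)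
    have h2 : (0 : ℤ) < ((n - 1 : ℕ) : ℤ) * c := by exact_mod_cast h1
    exact pos_of_mul_pos_right h2 (by positivity)
  refine ⟨b.natAbs, fun K hK => ⟨c.toNat * n ^ (b + K).toNat, ?_⟩⟩
  have hb : ((b + K).toNat : ℤ) = b + K := Int.toNat_of_nonneg (by omega)
  have hc' : ((c.toNat : ℕ) : ℝ) = c := by
    have : ((c.toNat : ℕ) : ℤ) = c := Int.toNat_of_nonneg hc.le
    exact_mod_cast this
  have : (n : ℝ) ^ b = (n : ℝ) ^ (b + K).toNat * (n : ℝ) ^ (-(K : ℤ)) := by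
    rw [← zpow_natCast, hb, ← zpow_add₀ hn0]; congr 1; ring
  push_cast
  rw [hc', this, hcast]
  ring

/-! ### The group `PLₙ(ℝ)` -/

theorem perm_continuous {f : Equiv.Perm ℝ} (hf : StrictMono f) : Continuous f :=
  hf.monotone.continuous_of_surjective f.surjective

theorem perm_inv_strictMono {f : Equiv.Perm ℝ} (hf : StrictMono f) : StrictMono ⇑f⁻¹ := by
  intro x y hxy
  rw [← hf.lt_iff_lt]
  simpa using hxy

theorem LocDiscrete.union {A B : Set ℝ} (hA : LocDiscrete A) (hB : LocDiscrete B) :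
    LocDiscrete (A ∪ B) := by
  intro x
  obtain ⟨e, he, h⟩ := hA x
  obtain ⟨e', he', h'⟩ := hB x
  refine ⟨min e e', lt_min he he', fun y hy hlt => ?_⟩
  rcases hy with hy | hy
  · exact h y hy (hlt.trans_le (min_le_left _ _))
  · exact h' y hy (hlt.trans_le (min_le_right _ _))

theorem LocDiscrete.singleton (a : ℝ) : LocDiscrete {a} := by
  intro x
  by_cases h : a = x
  · exact ⟨1, one_pos, fun y hy _ => hy.trans h⟩
  · refine ⟨|a - x|, abs_pos.2 (sub_ne_zero.2 h), fun y hy hlt => ?_⟩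
    rw [Set.mem_singleton_iff.1 hy] at hlt
    exact absurd hlt (lt_irrefl _)

theorem LocDiscrete.preimage {B : Set ℝ} (hB : LocDiscrete B) {g : Equiv.Perm ℝ}
    (hg : StrictMono g) : LocDiscrete (g ⁻¹' B) := by
  intro x
  obtain ⟨e, he, h⟩ := hB (g x)
  obtain ⟨d, hd, hd'⟩ := Metric.continuous_iff.1 (perm_continuous hg) x e he
  exact ⟨d, hd, fun y hy hlt => g.injective (h (g y) hy (hd' y hlt))⟩

/-- At a non-break point, the constant term of the affine germ lies in `ℤ[1/n]`. -/
theorem const_mem {n : ℕ} (hn : 2 ≤ n) {φ : ℝ → ZMod (n - 1)} (hφ : IsPhi n φ) {f : ℝ → ℝ}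
    (hf : ∀ q ∈ zpows n, f q ∈ zpows n) {x c ε : ℝ} {k : ℤ} (hε : 0 < ε)
    (h : ∀ y : ℝ, |y - x| < ε → f y = (n : ℝ) ^ k * y + c) : c ∈ zpows n := by
  obtain ⟨r, hr, -, h1, h2⟩ := delta_dense hn hφ (show x < x + ε by linarith)
  have := h r (by rw [abs_lt]; constructor <;> linarith)
  have : c = f r - (n : ℝ) ^ k * r := by linarith
  rw [this]
  exact zpows_sub hn (hf r hr) (zpows_mul hn (zpows_zpow _ _) hr)

theorem MemPL.inv_zpows {n : ℕ} (hn : 2 ≤ n) {φ : ℝ → ZMod (n - 1)} (hφ : IsPhi n φ)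
    {f : Equiv.Perm ℝ} (hf : MemPL n f) {q : ℝ} (hq : f q ∈ zpows n) : q ∈ zpows n := by
  obtain ⟨-, -, ⟨B, hB, -, hloc⟩, hz⟩ := hf
  by_cases hqB : q ∈ B
  · exact hB hqB
  obtain ⟨k, c, ε, hε, h⟩ := hloc q hqB
  have hc := const_mem hn hφ hz hε h
  have h0 : (n : ℝ) ≠ 0 := by positivity
  have hfq := h q (by simpa using hε)
  have : q = (n : ℝ) ^ (-k) * (f q - c) := by
    rw [hfq, add_sub_cancel_right, ← mul_assoc, ← zpow_add₀ h0]; simp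
  rw [this]
  exact zpows_mul hn (zpows_zpow _ _) (zpows_sub hn hq hc)

theorem MemPL.mul {n : ℕ} (hn : 2 ≤ n) {φ : ℝ → ZMod (n - 1)} (hφ : IsPhi n φ)
    {f g : Equiv.Perm ℝ} (hf : MemPL n f) (hg : MemPL n g) : MemPL n ⇑(f * g) := by
  have hg' := hg
  obtain ⟨fm, -, ⟨B, hB, hBd, hloc⟩, fz⟩ := hf
  obtain ⟨gm, -, ⟨C, hC, hCd, gloc⟩, gz⟩ := hg
  refine ⟨fm.comp gm, (f * g).surjective,
    ⟨C ∪ g ⁻¹' B, ?_, hCd.union (hBd.preimage gm), ?_⟩, fun q hq => fz _ (gz q hq)⟩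
  · rintro x (hx | hx)
    · exact hC hx
    · exact hg'.inv_zpows hn hφ (hB hx)
  · intro x hx
    rw [Set.mem_union, not_or] at hx
    obtain ⟨k, c, e, he, h⟩ := gloc x hx.1
    obtain ⟨k', c', e', he', h'⟩ := hloc (g x) hx.2
    obtain ⟨d, hd, hd'⟩ := Metric.continuous_iff.1 (perm_continuous gm) x e' he'
    refine ⟨k' + k, (n : ℝ) ^ k' * c + c', min e d, lt_min he hd, fun y hy => ?_⟩
    have h0 : (n : ℝ) ≠ 0 := by positivity
    rw [Equiv.Perm.mul_apply, h' (g y) (hd' y (hy.trans_le (min_le_right _ _))),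
      h y (hy.trans_le (min_le_left _ _)), zpow_add₀ h0]
    ring

theorem MemPL.inv {n : ℕ} (hn : 2 ≤ n) {φ : ℝ → ZMod (n - 1)} (hφ : IsPhi n φ)
    {f : Equiv.Perm ℝ} (hf : MemPL n f) : MemPL n ⇑f⁻¹ := by
  have hf' := hf
  obtain ⟨fm, -, ⟨B, hB, hBd, hloc⟩, fz⟩ := hf
  have im := perm_inv_strictMono fm
  refine ⟨im, f⁻¹.surjective, ⟨⇑f⁻¹ ⁻¹' B, ?_, hBd.preimage im, ?_⟩, fun q hq => ?_⟩
  · intro x hx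
    simpa using fz _ (hB hx)
  · intro x hx
    obtain ⟨k, c, e, he, h⟩ := hloc (f⁻¹ x) hx
    obtain ⟨d, hd, hd'⟩ := Metric.continuous_iff.1 (perm_continuous im) x e he
    refine ⟨-k, -((n : ℝ) ^ (-k) * c), d, hd, fun y hy => ?_⟩
    have h0 : (n : ℝ) ≠ 0 := by positivity
    have hy' := h (f⁻¹ y) (hd' y hy)
    have hfi : f (f⁻¹ y) = y := f.apply_symm_apply y
    rw [hfi] at hy'
    have : (n : ℝ) ^ (-k) * (n : ℝ) ^ k = 1 := by rw [← zpow_add₀ h0]; simp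
    linear_combination (-(f⁻¹ y)) * this - (n : ℝ) ^ (-k) * hy'
  · exact hf'.inv_zpows hn hφ (by simpa using hq)

theorem MemPL.addRight {n : ℕ} (hn : 2 ≤ n) {a : ℝ} (ha : a ∈ zpows n) :
    MemPL n ⇑(Equiv.addRight a) := by
  refine ⟨fun x y h => by simpa using h, (Equiv.addRight a).surjective,
    ⟨∅, Set.empty_subset _, fun x => ⟨1, one_pos, by simp⟩, fun x _ => ?_⟩,
    fun q hq => zpows_add hn hq ha⟩
  exact ⟨0, a, 1, one_pos, fun y _ => by simp⟩

/-- An element of `PLₙ(ℝ)` fixing `p ∈ ℤ[1/n]` can be cut off at `p`. -/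
theorem MemPL.cut {n : ℕ} {f : Equiv.Perm ℝ} (hf : MemPL n f) {p : ℝ} (hp : p ∈ zpows n)
    (hfp : f p = p) :
    ∃ g : Equiv.Perm ℝ, MemPL n g ∧ (∀ y ≤ p, g y = f y) ∧ ∀ y, p ≤ y → g y = y := by
  obtain ⟨fm, -, ⟨B, hB, hBd, hloc⟩, fz⟩ := hf
  have hle : ∀ y, y ≤ p → f y ≤ p := fun y hy => by
    rw [← hfp]; exact fm.monotone hy
  let F : ℝ → ℝ := fun y => if y ≤ p then f y else y
  have hF1 : ∀ y, y ≤ p → F y = f y := fun y hy => if_pos hy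
  have hF2 : ∀ y, p ≤ y → F y = y := by
    intro y hy
    rcases hy.eq_or_lt with rfl | h
    · rw [hF1 _ le_rfl, hfp]
    · exact if_neg (not_le.2 h)
  have Fm : StrictMono F := by
    intro x y hxy
    rcases le_or_gt y p with hy | hy
    · rw [hF1 y hy, hF1 x (hxy.le.trans hy)]; exact fm hxy
    · rw [hF2 y hy.le]
      rcases le_or_gt x p with hx | hx
      · rw [hF1 x hx]; exact (hle x hx).trans_lt hy
      · rw [hF2 x hx.le]; exact hxy
  have Fs : Function.Surjective F := by
    intro z
    rcases le_or_gt z p with hz | hz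
    · refine ⟨f.symm z, ?_⟩
      rw [hF1, f.apply_symm_apply]
      rw [← fm.le_iff_le, hfp, f.apply_symm_apply]; exact hz
    · exact ⟨z, hF2 z hz.le⟩
  refine ⟨Equiv.ofBijective F ⟨Fm.injective, Fs⟩, ⟨Fm, Fs,
    ⟨B ∪ {p}, ?_, hBd.union (LocDiscrete.singleton p), ?_⟩, ?_⟩, hF1, hF2⟩
  · rintro x (hx | rfl)
    · exact hB hx
    · exact hp
  · intro x hx
    rw [Set.mem_union, not_or] at hx
    rcases lt_or_gt_of_ne hx.2 with h | h
    · obtain ⟨k, c, e, he, h'⟩ := hloc x hx.1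
      refine ⟨k, c, min e (p - x), lt_min he (by linarith), fun y hy => ?_⟩
      have h2 := (abs_lt.1 (hy.trans_le (min_le_right _ _))).2
      change F y = _
      rw [hF1 y (by linarith)]
      exact h' y (hy.trans_le (min_le_left _ _))
    · refine ⟨0, 0, x - p, sub_pos.2 h, fun y hy => ?_⟩
      have h2 := (abs_lt.1 hy).1
      change F y = _
      rw [hF2 y (by linarith)]; simp
  · intro q hq
    change F q ∈ zpows n
    rcases le_total q p with h | h
    · rw [hF1 q h]; exact fz q hq
    · rw [hF2 q h]; exact hq

/-! ### Elements of `BPLₙ(ℝ)` preserve the classes modulo `Δₙ` -/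

/-- A map that is locally affine on `(a, b)` is affine there, hence also at `a` and `b`
when continuous. -/
theorem affine_of_loc {n : ℕ} {f : ℝ → ℝ} (hc : Continuous f) {a b : ℝ} (hab : a < b)
    (hloc : ∀ x ∈ Set.Ioo a b, ∃ (k : ℤ) (c : ℝ), ∃ ε > 0,
      ∀ y : ℝ, |y - x| < ε → f y = (n : ℝ) ^ k * y + c) :
    ∃ (k : ℤ) (c : ℝ), ∀ y ∈ Set.Icc a b, f y = (n : ℝ) ^ k * y + c := by
  have hd : ∀ x ∈ Set.Ioo a b, ∃ (k : ℤ) (c : ℝ), ∀ᶠ y in nhds x,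
      deriv f y = (n : ℝ) ^ k ∧ f y = (n : ℝ) ^ k * y + c := by
    intro x hx
    obtain ⟨k, c, e, he, h⟩ := hloc x hx
    refine ⟨k, c, ?_⟩
    have h1 : ∀ᶠ y in nhds x, f y = (n : ℝ) ^ k * y + c :=
      Metric.eventually_nhds_iff.2 ⟨e, he, fun y hy => h y hy⟩
    filter_upwards [h1.eventually_nhds, h1] with y hy hy'
    refine ⟨?_, hy'⟩
    have : f =ᶠ[nhds y] fun y => (n : ℝ) ^ k * y + c := hy
    rw [this.deriv_eq]
    simp
  have hconst : ∀ x ∈ Set.Ioo a b, ∀ y ∈ Set.Ioo a b,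
      deriv f x = deriv f y ∧ f x - deriv f x * x = f y - deriv f y * y := by
    intro x hx y hy
    refine isPreconnected_Ioo.induction₂'
      (fun x y => deriv f x = deriv f y ∧ f x - deriv f x * x = f y - deriv f y * y)
      ?_ ?_ hx hy
    · intro x hx
      obtain ⟨k, c, h⟩ := hd x hx
      have hx' := h.self_of_nhds
      filter_upwards [h.filter_mono nhdsWithin_le_nhds] with y hy
      rw [hy.1, hy.2, hx'.1, hx'.2]
      simp
    · intro x y z _ _ _ h1 h2
      exact ⟨h1.1.trans h2.1, h1.2.trans h2.2⟩
  have hm : (a + b) / 2 ∈ Set.Ioo a b := ⟨by linarith, by linarith⟩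
  obtain ⟨k, c, h⟩ := hd _ hm
  have hm' := h.self_of_nhds
  refine ⟨k, c, fun y hy => ?_⟩
  have hcl : y ∈ closure (Set.Ioo a b) := by rwa [closure_Ioo hab.ne]
  have hclosed : IsClosed {y | f y = (n : ℝ) ^ k * y + c} :=
    isClosed_eq hc (by fun_prop)
  refine closure_minimal (fun z hz => ?_) hclosed hcl
  have := hconst z hz _ hm
  rw [hm'.1, hm'.2] at this
  change f z = _
  have h2 := this.2
  rw [this.1] at h2
  linarith

theorem phi_affine {n : ℕ} (hn : 2 ≤ n) {φ : ℝ → ZMod (n - 1)} (hφ : IsPhi n φ) {f : ℝ → ℝ}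
    (hz : ∀ q ∈ zpows n, f q ∈ zpows n) {k : ℤ} {c y z : ℝ} (hy : y ∈ zpows n)
    (hz' : z ∈ zpows n) (h1 : f y = (n : ℝ) ^ k * y + c) (h2 : f z = (n : ℝ) ^ k * z + c) :
    φ (f y) - φ y = φ (f z) - φ z := by
  have h : f y - f z = (n : ℝ) ^ k * (y - z) := by rw [h1, h2]; ring
  have h' := congrArg φ h
  rw [phi_sub hφ (hz y hy) (hz z hz'), hφ.2.1 _ (zpows_zpow _ _) _ (zpows_sub hn hy hz'),
    phi_zpow hn hφ, phi_sub hφ hy hz'] at h'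
  linear_combination h'

/-- The displacement modulo `Δₙ` is locally constant along `ℤ[1/n]`, also across breaks. -/
theorem phi_loc {n : ℕ} (hn : 2 ≤ n) {φ : ℝ → ZMod (n - 1)} (hφ : IsPhi n φ)
    {f : Equiv.Perm ℝ} (hf : MemPL n f) (x : ℝ) :
    ∃ ε > 0, ∀ y ∈ zpows n, ∀ z ∈ zpows n, |y - x| < ε → |z - x| < ε →
      φ (f y) - φ y = φ (f z) - φ z := by
  obtain ⟨fm, -, ⟨B, hB, hBd, hloc⟩, fz⟩ := hf
  have hc := perm_continuous fm
  by_cases hx : x ∈ B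
  · obtain ⟨e, he, h⟩ := hBd x
    have hxz := hB hx
    obtain ⟨k, c, hr⟩ := affine_of_loc (n := n) hc (show x < x + e by linarith) fun y hy =>
      hloc y fun hyB => hy.1.ne' <| h y hyB <| by
        rw [abs_lt]; constructor <;> linarith [hy.1, hy.2]
    obtain ⟨k', c', hl⟩ := affine_of_loc (n := n) hc (show x - e < x by linarith) fun y hy =>
      hloc y fun hyB => hy.2.ne <| h y hyB <| by
        rw [abs_lt]; constructor <;> linarith [hy.1, hy.2]
    have key : ∀ y ∈ zpows n, |y - x| < e → φ (f y) - φ y = φ (f x) - φ x := by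
      intro y hy hlt
      rw [abs_lt] at hlt
      rcases le_total x y with h | h
      · exact phi_affine hn hφ fz hy hxz (hr y ⟨h, by linarith⟩) (hr x ⟨le_rfl, by linarith⟩)
      · exact phi_affine hn hφ fz hy hxz (hl y ⟨by linarith, h⟩) (hl x ⟨by linarith, le_rfl⟩)
    exact ⟨e, he, fun y hy z hz h1 h2 => (key y hy h1).trans (key z hz h2).symm⟩
  · obtain ⟨k, c, e, he, h⟩ := hloc x hx
    exact ⟨e, he, fun y hy z hz h1 h2 => phi_affine hn hφ fz hy hz (h y h1) (h z h2)⟩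

theorem phi_preserved {n : ℕ} (hn : 2 ≤ n) {φ : ℝ → ZMod (n - 1)} (hφ : IsPhi n φ)
    {f : Equiv.Perm ℝ} (hf : MemPL n f) {M : ℝ} (hM : ∀ x, M < x → f x = x) {x : ℝ}
    (hx : x ∈ zpows n) : φ (f x) = φ x := by
  let Z : Set ℝ := {x | ∀ᶠ y in nhds x, y ∈ zpows n → φ (f y) = φ y}
  have hopen : IsOpen Z := by
    rw [isOpen_iff_mem_nhds]
    exact fun x hx => Filter.Eventually.eventually_nhds hx
  have hclosed : IsClosed Z := by
    -- If `x` is in the closure, one good point of `ℤ[1/n]` near `x` makes all of them good.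
    refine isClosed_of_closure_subset fun x hx => ?_
    obtain ⟨e, he, h⟩ := phi_loc hn hφ hf x
    obtain ⟨w, hw, hwx⟩ := Metric.mem_closure_iff.1 hx e he
    have hw' : ∀ᶠ y in nhds w, y ∈ zpows n → φ (f y) = φ y := hw
    have hnear : ∀ᶠ y in nhds w, |y - x| < e :=
      (isOpen_lt (by fun_prop) continuous_const).mem_nhds
        (by rw [dist_comm] at hwx; exact hwx)
    obtain ⟨d, hd, hd'⟩ := Metric.eventually_nhds_iff.1 (hw'.and hnear)
    obtain ⟨r, hr, -, h1, h2⟩ := delta_dense hn hφ (show w < w + d by linarith)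
    have hr' := hd' (y := r) (by rw [Real.dist_eq, abs_lt]; constructor <;> linarith)
    refine Metric.eventually_nhds_iff.2 ⟨e, he, fun y hy hyz => ?_⟩
    have := h y hyz r hr hy hr'.2
    rw [hr'.1 hr, sub_self] at this
    exact sub_eq_zero.1 this
  have hne : Z.Nonempty := by
    refine ⟨M + 1, ?_⟩
    filter_upwards [lt_mem_nhds (show M < M + 1 by linarith)] with y hy _
    rw [hM y hy]
  have hZ : Z = Set.univ := IsClopen.eq_univ ⟨hclosed, hopen⟩ hne
  have : x ∈ Z := hZ ▸ Set.mem_univ x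
  exact Filter.Eventually.self_of_nhds this hx

/-! ### Elementary bumps -/

/-- The bump map carrying `x` to `x + (n - 1) u`: slope `n` on `[x - u, x]`, slope `1/n` on
`[x, x + n u]`, and the identity elsewhere. -/
def bump (n : ℕ) (x u y : ℝ) : ℝ :=
  max y (min (n * (y - x) + (x + (n - 1) * u)) ((n : ℝ)⁻¹ * (y - x) + (x + (n - 1) * u)))

theorem bump_outside {n : ℕ} (hn : 2 ≤ n) {x u y : ℝ}
    (hy : y ≤ x - u ∨ x + n * u ≤ y) : bump n x u y = y := by
  have h2 : (2 : ℝ) ≤ n := by exact_mod_cast hn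
  have hi : (n : ℝ) * (n : ℝ)⁻¹ = 1 := mul_inv_cancel₀ (by positivity)
  rw [bump, max_eq_left_iff]
  rcases hy with h | h
  · refine (min_le_left _ _).trans ?_
    nlinarith
  · refine (min_le_right _ _).trans ?_
    have e : (n : ℝ) * (y - ((n : ℝ)⁻¹ * (y - x) + (x + (n - 1) * u)))
        = (n - 1) * (y - (x + n * u)) := by linear_combination (x - y) * hi
    rw [← sub_nonneg, ← mul_nonneg_iff_of_pos_left (show (0 : ℝ) < n by positivity), e]
    exact mul_nonneg (by linarith) (by linarith)

theorem bump_left {n : ℕ} (hn : 2 ≤ n) {x u y : ℝ}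
    (h1 : x - u ≤ y) (h2 : y ≤ x) : bump n x u y = n * (y - x) + (x + (n - 1) * u) := by
  have hn2 : (2 : ℝ) ≤ n := by exact_mod_cast hn
  have hi : (n : ℝ)⁻¹ ≤ 1 := inv_le_one_of_one_le₀ (by linarith)
  rw [bump, min_eq_left, max_eq_right]
  · nlinarith
  · nlinarith

theorem bump_right {n : ℕ} (hn : 2 ≤ n) {x u y : ℝ}
    (h1 : x ≤ y) (h2 : y ≤ x + n * u) :
    bump n x u y = (n : ℝ)⁻¹ * (y - x) + (x + (n - 1) * u) := by
  have hn2 : (2 : ℝ) ≤ n := by exact_mod_cast hn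
  have hi : (n : ℝ)⁻¹ ≤ 1 := inv_le_one_of_one_le₀ (by linarith)
  have hi' : (n : ℝ) * (n : ℝ)⁻¹ = 1 := mul_inv_cancel₀ (by positivity)
  rw [bump, min_eq_right, max_eq_right]
  · rw [← sub_nonneg, ← mul_nonneg_iff_of_pos_left (show (0 : ℝ) < n by positivity)]
    nlinarith
  · nlinarith

theorem exists_bump {n : ℕ} (hn : 2 ≤ n) {x u : ℝ} (hx : x ∈ zpows n) (huz : u ∈ zpows n)
    (hu : 0 < u) : ∃ h : Equiv.Perm ℝ, MemPL n h ∧ h x = x + (n - 1) * u ∧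
      ∀ y, y ∉ Set.Ioo (x - u) (x + n * u) → h y = y := by
  have hn2 : (2 : ℝ) ≤ n := by exact_mod_cast hn
  have hnpos : (0 : ℝ) < n := by positivity
  have hnz : (n : ℝ) ∈ zpows n := by simpa using zpows_intCast n n
  have h1z : (1 : ℝ) ∈ zpows n := by simpa using zpows_intCast n 1
  have hiz : (n : ℝ)⁻¹ ∈ zpows n := by simpa using zpows_zpow n (-1)
  have hmono : StrictMono (bump n x u) := by
    have h1 : StrictMono fun y : ℝ => (n : ℝ) * (y - x) + (x + (n - 1) * u) := by
      intro a b hab; dsimp only; gcongr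
    have h2 : StrictMono fun y : ℝ => (n : ℝ)⁻¹ * (y - x) + (x + (n - 1) * u) := by
      intro a b hab; dsimp only; gcongr
    intro a b hab
    exact max_lt_max hab (min_lt_min (h1 hab) (h2 hab))
  have hcont : Continuous (bump n x u) := by unfold bump; fun_prop
  have hnu : 0 < n * u := by positivity
  have hsurj : Function.Surjective (bump n x u) := by
    refine hcont.surjective ?_ ?_
    · refine Filter.tendsto_id.congr' ?_
      filter_upwards [Filter.eventually_ge_atTop (x + n * u)] with y hy
      exact (bump_outside hn (Or.inr hy)).symm
    · refine Filter.tendsto_id.congr' ?_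
      filter_upwards [Filter.eventually_le_atBot (x - u)] with y hy
      exact (bump_outside hn (Or.inl hy)).symm
  refine ⟨Equiv.ofBijective _ ⟨hmono.injective, hsurj⟩, ⟨hmono, hsurj,
    ⟨{x - u} ∪ {x} ∪ {x + n * u}, ?_,
      ((LocDiscrete.singleton _).union (LocDiscrete.singleton _)).union
        (LocDiscrete.singleton _), ?_⟩, ?_⟩, ?_, ?_⟩
  · rintro y ((rfl | rfl) | rfl)
    · exact zpows_sub hn hx huz
    · exact hx
    · exact zpows_add hn hx (zpows_mul hn hnz huz)
  · intro y hy
    simp only [Set.mem_union, Set.mem_singleton_iff, not_or] at hy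
    obtain ⟨⟨n1, n2⟩, n3⟩ := hy
    change ∃ (k : ℤ) (c : ℝ), ∃ ε > 0, ∀ z : ℝ, |z - y| < ε → bump n x u z = (n : ℝ) ^ k * z + c
    rcases lt_or_gt_of_ne n1 with l1 | l1
    · refine ⟨0, 0, x - u - y, by linarith, fun z hz => ?_⟩
      rw [abs_lt] at hz
      rw [bump_outside hn (Or.inl (by linarith))]; simp
    rcases lt_or_gt_of_ne n2 with l2 | l2
    · refine ⟨1, -(n * x) + (x + (n - 1) * u), min (y - (x - u)) (x - y),
        lt_min (by linarith) (by linarith), fun z hz => ?_⟩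
      rw [lt_min_iff, abs_lt, abs_lt] at hz
      rw [bump_left hn (by linarith) (by linarith), zpow_one]; ring
    rcases lt_or_gt_of_ne n3 with l3 | l3
    · refine ⟨-1, -((n : ℝ)⁻¹ * x) + (x + (n - 1) * u), min (y - x) (x + n * u - y),
        lt_min (by linarith) (by linarith), fun z hz => ?_⟩
      rw [lt_min_iff, abs_lt, abs_lt] at hz
      rw [bump_right hn (by linarith) (by linarith), zpow_neg_one]; ring
    · refine ⟨0, 0, y - (x + n * u), by linarith, fun z hz => ?_⟩
      rw [abs_lt] at hz
      rw [bump_outside hn (Or.inr (by linarith))]; simp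
  · intro q hq
    change bump n x u q ∈ zpows n
    have hc : x + (n - 1) * u ∈ zpows n :=
      zpows_add hn hx (zpows_mul hn (zpows_sub hn hnz h1z) huz)
    have ha := zpows_add hn (zpows_mul hn hnz (zpows_sub hn hq hx)) hc
    have hb := zpows_add hn (zpows_mul hn hiz (zpows_sub hn hq hx)) hc
    rw [bump]
    rcases max_choice q (min (n * (q - x) + (x + (n - 1) * u))
      ((n : ℝ)⁻¹ * (q - x) + (x + (n - 1) * u))) with e | e
    · rw [e]; exact hq
    · rw [e]
      rcases min_choice (n * (q - x) + (x + (n - 1) * u))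
        ((n : ℝ)⁻¹ * (q - x) + (x + (n - 1) * u)) with e | e
      · rw [e]; exact ha
      · rw [e]; exact hb
  · change bump n x u x = _
    rw [bump_left hn (by linarith) le_rfl]; ring
  · intro y hy
    rw [Set.mem_Ioo, not_and_or, not_lt, not_lt] at hy
    exact bump_outside hn hy

/-! ### Generation -/

/-- `Γ` contains every translation by an element of `Δₙ`: divide by a large power of `n`,
which does not leave `Δₙ`. -/
theorem translation_mem {n : ℕ} (hn : 2 ≤ n) {φ : ℝ → ZMod (n - 1)} (hφ : IsPhi n φ) {a : ℝ}
    (ha : a ∈ zpows n) (h0 : φ a = 0) :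
    Equiv.addRight a ∈ Subgroup.closure (GammaGen n φ) := by
  have hn0 : (n : ℝ) ≠ 0 := by positivity
  obtain ⟨K, hK⟩ := exists_zpow_lt hn (ε := 1 / (2 * (|a| + 1))) (by positivity)
  have hK := hK K le_rfl
  rw [lt_div_iff₀ (by positivity)] at hK
  have hu : 0 < (n : ℝ) ^ (-(K : ℤ)) := by positivity
  set b := a * (n : ℝ) ^ (-(K : ℤ)) with hb
  have hmem : Equiv.addRight b ∈ Subgroup.closure (GammaGen n φ) := by
    refine Subgroup.subset_closure (Or.inl ⟨b, zpows_mul hn ha (zpows_zpow _ _), ?_, ?_,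
      fun x => rfl⟩)
    · rw [hb, hφ.2.1 _ ha _ (zpows_zpow _ _), h0, zero_mul]
    · rw [Set.mem_Ioo, ← abs_lt, hb, abs_mul, abs_of_pos hu]
      nlinarith
  have : Equiv.addRight a = (Equiv.addRight b) ^ (n ^ K) := by
    have hp : ∀ m : ℕ, ∀ x : ℝ, ((Equiv.addRight b) ^ m) x = x + m * b := by
      intro m
      induction m with
      | zero => intro x; simp
      | succ m ih =>
        intro x
        rw [pow_succ, Equiv.Perm.mul_apply, ih, Equiv.coe_addRight]
        push_cast; ring
    ext x
    rw [hp, hb, Equiv.coe_addRight, zpow_neg, zpow_natCast]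
    push_cast
    field_simp
  rw [this]
  exact pow_mem hmem _

theorem small_mem {n : ℕ} (hn : 2 ≤ n) {φ : ℝ → ZMod (n - 1)} (hφ : IsPhi n φ)
    {f : Equiv.Perm ℝ} (hf : MemPL n f) {A B : ℝ} (hs : ∀ y, y ∉ Set.Ioo A B → f y = y)
    (hlen : B - A < 1) : f ∈ Subgroup.closure (GammaGen n φ) := by
  obtain ⟨a, ha, h0, h1, h2⟩ := delta_dense hn hφ (show B - 1 < A by linarith)
  set t := Equiv.addRight a with ht
  have htm := translation_mem hn hφ ha h0
  have htPL := MemPL.addRight hn ha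
  set g := t⁻¹ * (f * t) with hg
  have hgPL : MemPL n g := (htPL.inv hn hφ).mul hn hφ (hf.mul hn hφ htPL)
  have hgs : ∀ x, x ∉ Set.Ioo (0 : ℝ) 1 → g x = x := by
    intro x hx
    have : f (t x) = t x := by
      refine hs _ fun h => hx ?_
      rw [ht, Equiv.coe_addRight, Set.mem_Ioo] at h
      exact ⟨by linarith [h.1], by linarith [h.2]⟩
    rw [hg, Equiv.Perm.mul_apply, Equiv.Perm.mul_apply, this]
    exact t.symm_apply_apply x
  have hgm : g ∈ Subgroup.closure (GammaGen n φ) := by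
    refine Subgroup.subset_closure (Or.inr ⟨⟨hgPL, 1, fun x hx => hgs x fun h => ?_⟩, hgs⟩)
    rw [abs_of_pos h.1] at hx
    exact absurd hx (not_lt.2 h.2.le)
  have : f = t * g * t⁻¹ := by rw [hg]; group
  rw [this]
  exact mul_mem (mul_mem htm hgm) (inv_mem htm)

/-- Points of `(A, B)` congruent modulo `Δₙ` are joined by a chain of bumps of one small size `u`,
each with support inside `(A, B)`. -/
theorem move_right {n : ℕ} (hn : 2 ≤ n) {φ : ℝ → ZMod (n - 1)} (hφ : IsPhi n φ) {A B p q : ℝ}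
    (hp : p ∈ zpows n) (hq : q ∈ zpows n) (hφpq : φ p = φ q) (hAp : A < p) (hpq : p < q)
    (hqB : q < B) :
    ∃ h ∈ Subgroup.closure (GammaGen n φ), MemPL n ⇑h ∧ h p = q ∧
      ∀ y, y ∉ Set.Ioo A B → h y = y := by
  have hn2 : (2 : ℝ) ≤ n := by exact_mod_cast hn
  have hN : (0 : ℝ) < n - 1 := by linarith
  have hnz : (n : ℝ) ∈ zpows n := by simpa using zpows_intCast n n
  have h1z : (1 : ℝ) ∈ zpows n := by simpa using zpows_intCast n 1
  obtain ⟨K₀, hK₀⟩ := delta_form hn hφ (zpows_sub hn hq hp)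
    (by rw [phi_sub hφ hq hp, hφpq, sub_self]) (sub_pos.2 hpq)
  obtain ⟨K₁, hK₁⟩ := exists_zpow_lt hn
    (ε := min (1 / (n + 1)) (min (p - A) (B - q)))
    (lt_min (by positivity) (lt_min (by linarith) (by linarith)))
  obtain ⟨m, hm⟩ := hK₀ (max K₀ K₁) (le_max_left _ _)
  have hsmall := hK₁ (max K₀ K₁) (le_max_right _ _)
  have hu : 0 < (n : ℝ) ^ (-((max K₀ K₁ : ℕ) : ℤ)) := by positivity
  have huz := zpows_zpow n (-((max K₀ K₁ : ℕ) : ℤ))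
  set u := (n : ℝ) ^ (-((max K₀ K₁ : ℕ) : ℤ))
  rw [lt_min_iff, lt_min_iff, lt_div_iff₀ (by positivity)] at hsmall
  have hstep : 0 < (n - 1) * u := mul_pos hN hu
  have key : ∀ m : ℕ, ∃ h ∈ Subgroup.closure (GammaGen n φ), MemPL n ⇑h ∧
      h p = p + m * ((n - 1) * u) ∧
      ∀ y, y ∉ Set.Ioo (p - u) (p + m * ((n - 1) * u) + u) → h y = y := by
    intro m
    induction m with
    | zero =>
      refine ⟨1, one_mem _, ?_, by simp, fun y _ => rfl⟩
      have : (1 : Equiv.Perm ℝ) = Equiv.addRight (0 : ℝ) := by ext x; simp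
      rw [this]
      exact MemPL.addRight hn (by simpa using zpows_intCast n 0)
    | succ m ih =>
      obtain ⟨h, hΓ, hPL, hhp, hs⟩ := ih
      have hx : p + m * ((n - 1) * u) ∈ zpows n :=
        zpows_add hn hp (zpows_mul hn (by simpa using zpows_intCast n m)
          (zpows_mul hn (zpows_sub hn hnz h1z) huz))
      obtain ⟨b, bPL, bx, bs⟩ := exists_bump hn hx huz hu
      have bΓ := small_mem hn hφ bPL bs (by linarith [hsmall.1])
      refine ⟨b * h, mul_mem bΓ hΓ, bPL.mul hn hφ hPL, ?_, fun y hy => ?_⟩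
      · rw [Equiv.Perm.mul_apply, hhp, bx]; push_cast; ring
      · have hmpos : (0 : ℝ) ≤ m * ((n - 1) * u) := by positivity
        push_cast at hy
        rw [Set.mem_Ioo, not_and_or, not_lt, not_lt] at hy
        have h1 : h y = y := hs y fun hy' => by
          rcases hy with hy | hy
          · linarith [hy'.1]
          · linarith [hy'.2]
        rw [Equiv.Perm.mul_apply, h1]
        refine bs y fun hy' => ?_
        rcases hy with hy | hy
        · linarith [hy'.1]
        · linarith [hy'.2]
  obtain ⟨h, hΓ, hPL, hhp, hs⟩ := key m
  have hq' : p + m * ((n - 1) * u) = q := by linarith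
  rw [hq'] at hhp hs
  refine ⟨h, hΓ, hPL, hhp, fun y hy => hs y fun hy' => hy ⟨?_, ?_⟩⟩
  · linarith [hy'.1]
  · linarith [hy'.2]

theorem move {n : ℕ} (hn : 2 ≤ n) {φ : ℝ → ZMod (n - 1)} (hφ : IsPhi n φ) {A B p q : ℝ}
    (hp : p ∈ zpows n) (hq : q ∈ zpows n) (hφpq : φ p = φ q) (hpAB : p ∈ Set.Ioo A B)
    (hqAB : q ∈ Set.Ioo A B) :
    ∃ h ∈ Subgroup.closure (GammaGen n φ), MemPL n ⇑h ∧ h p = q ∧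
      ∀ y, y ∉ Set.Ioo A B → h y = y := by
  rcases lt_trichotomy p q with h | rfl | h
  · exact move_right hn hφ hp hq hφpq hpAB.1 h hqAB.2
  · refine ⟨1, one_mem _, ?_, rfl, fun y _ => rfl⟩
    have : (1 : Equiv.Perm ℝ) = Equiv.addRight (0 : ℝ) := by ext x; simp
    rw [this]
    exact MemPL.addRight hn (by simpa using zpows_intCast n 0)
  · obtain ⟨g, hΓ, hPL, hgq, hs⟩ := move_right hn hφ hq hp hφpq.symm hqAB.1 h hpAB.2
    refine ⟨g⁻¹, inv_mem hΓ, hPL.inv hn hφ, ?_, fun y hy => ?_⟩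
    · rw [Equiv.Perm.inv_eq_iff_eq, hgq]
    · rw [Equiv.Perm.inv_eq_iff_eq, hs y hy]

/-- Fragmentation: elements supported in `(i/n, (i+d)/n)` lie in `Γ`, by induction on `d`. -/
theorem frag {n : ℕ} (hn : 2 ≤ n) {φ : ℝ → ZMod (n - 1)} (hφ : IsPhi n φ) (d : ℕ) :
    ∀ (i : ℤ) (f : Equiv.Perm ℝ), MemPL n f →
      (∀ y, y ∉ Set.Ioo (i * (n : ℝ)⁻¹) ((i + d) * (n : ℝ)⁻¹) → f y = y) →
      f ∈ Subgroup.closure (GammaGen n φ) := by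
  have hn2 : (2 : ℝ) ≤ n := by exact_mod_cast hn
  have hi0 : 0 < (n : ℝ)⁻¹ := by positivity
  have hi1 : (n : ℝ)⁻¹ < 1 := inv_lt_one_of_one_lt₀ (by linarith)
  induction d with
  | zero => exact fun i f hf hs => small_mem hn hφ hf hs (by push_cast; linarith)
  | succ d ih =>
    intro i f hf hs
    rcases Nat.eq_zero_or_pos d with rfl | hd
    · exact small_mem hn hφ hf hs (by push_cast; linarith)
    have hd1 : (1 : ℝ) ≤ d := by exact_mod_cast hd
    set A := i * (n : ℝ)⁻¹ with hA
    set B := (i + (d + 1 : ℕ)) * (n : ℝ)⁻¹ with hB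
    set p := ((i + 1 : ℤ) : ℝ) * (n : ℝ)⁻¹ with hp
    have hpz : p ∈ zpows n :=
      zpows_mul hn (zpows_intCast _ _) (by simpa using zpows_zpow n (-1))
    have hpA : p = A + (n : ℝ)⁻¹ := by rw [hp, hA]; push_cast; ring
    have hBp : B = p + d * (n : ℝ)⁻¹ := by rw [hB, hp]; push_cast; ring
    have hpAB : p ∈ Set.Ioo A B := ⟨by linarith, by nlinarith⟩
    have hfA : f A = A := hs A fun h => lt_irrefl _ h.1
    have hfB : f B = B := hs B fun h => lt_irrefl _ h.2
    have hqAB : f p ∈ Set.Ioo A B :=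
      ⟨by simpa only [hfA] using hf.1 hpAB.1, by simpa only [hfB] using hf.1 hpAB.2⟩
    have hφp : φ (f p) = φ p :=
      phi_preserved hn hφ hf (M := B) (fun x hx => hs x fun h => lt_asymm h.2 hx) hpz
    obtain ⟨h, hΓ, hPL, hhp, hhs⟩ := move hn hφ hpz (hf.2.2.2 p hpz) hφp.symm hpAB hqAB
    have hgPL : MemPL n ⇑(h⁻¹ * f) := (hPL.inv hn hφ).mul hn hφ hf
    have hgs : ∀ y, y ∉ Set.Ioo A B → (h⁻¹ * f) y = y := by
      intro y hy
      rw [Equiv.Perm.mul_apply, hs y hy, Equiv.Perm.inv_eq_iff_eq, hhs y hy]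
    have hgp : (h⁻¹ * f) p = p := by
      rw [Equiv.Perm.mul_apply, Equiv.Perm.inv_eq_iff_eq, hhp]
    set g := h⁻¹ * f with hg
    obtain ⟨l, lPL, l1, l2⟩ := hgPL.cut hpz hgp
    have lΓ : l ∈ Subgroup.closure (GammaGen n φ) := by
      refine small_mem hn hφ lPL (A := A) (B := p) (fun y hy => ?_) (by linarith)
      rcases le_total p y with hpy | hpy
      · exact l2 y hpy
      · rcases hpy.eq_or_lt with rfl | hlt
        · exact l2 _ le_rfl
        · rw [l1 y hpy]
          exact hgs y fun h' => hy ⟨h'.1, hlt⟩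
    have rΓ : l⁻¹ * g ∈ Subgroup.closure (GammaGen n φ) := by
      refine ih (i + 1) _ ((lPL.inv hn hφ).mul hn hφ hgPL) fun y hy => ?_
      have hBp' : ((i + 1 : ℤ) + (d : ℝ)) * (n : ℝ)⁻¹ = B := by rw [hB]; push_cast; ring
      rw [hBp'] at hy
      rw [Equiv.Perm.mul_apply, Equiv.Perm.inv_eq_iff_eq]
      rcases le_or_gt y p with hyp | hyp
      · exact (l1 y hyp).symm
      · rw [hgs y fun h' => hy ⟨hyp, h'.2⟩, l2 y hyp.le]
    have : f = h * (l * (l⁻¹ * g)) := by rw [hg]; group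
    rw [this]
    exact mul_mem hΓ (mul_mem lΓ rΓ)

/-- The subgroup `Γ` generated by the translations by elements of
`Δₙ ∩ (-1/2, 1/2)` and the elements of `BPLₙ(ℝ)` supported in `(0,1)` contains `BPLₙ(ℝ)`. -/
theorem stmt_7 (n : ℕ) (hn : 2 ≤ n) (φ : ℝ → ZMod (n - 1)) (hφ : IsPhi n φ)
    (f : Equiv.Perm ℝ) (hf : MemBPL n ⇑f) :
    f ∈ Subgroup.closure (GammaGen n φ) := by
  have hn2 : (2 : ℝ) ≤ n := by exact_mod_cast hn
  have hn0 : (n : ℝ) ≠ 0 := by positivity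
  obtain ⟨hPL, M, hM⟩ := hf
  obtain ⟨N, hN⟩ := exists_nat_gt M
  refine frag hn hφ (2 * N * n) (-(N * n : ℤ)) f hPL fun y hy => hM y ?_
  have h1 : ((-(N * n : ℤ) : ℤ) : ℝ) * (n : ℝ)⁻¹ = -N := by push_cast; field_simp
  have h2 : (((-(N * n : ℤ) : ℤ) : ℝ) + (2 * N * n : ℕ)) * (n : ℝ)⁻¹ = N := by
    push_cast; field_simp; ring
  rw [h1, h2, Set.mem_Ioo, ← abs_lt, not_lt] at hy
  linarith
end
end

section
/- Let n ≥ 2 be an integer and let G be any group of homeomorphisms of ℝ with BPL_n(ℝ) ⊆ G ⊆ P̃L_n(ℝ). Then for every group automorphism α of G there exists a unique homeomorphism h : ℝ → ℝ such that α(f) = h ∘ f ∘ h⁻¹ for all f ∈ G; consequently, the map Φ : N(G) → Aut(G) given by Φ(h)(f) = h ∘ f ∘ h⁻¹, where N(G) = {h ∈ Homeo(ℝ) : hGh⁻¹ = G}, is a group isomorphism. -/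
/-!
The theorem is an instance of reconstructing a space from a group of its homeomorphisms. Write
`Γ = G`, acting on `ℝ`. All that is used about `G` is collected in `PLAut.GoodAction`: its elements
are monotone or antitone, they are affine on either side of each point, and elements of bounded
support exist in abundance (`PLAut.goodAction`, from explicit two-slope bumps in `BPLₙ(ℝ)`).

*Characteristic subgroup.* Higman's argument shows that every nontrivial normal subgroup of `Γ`
contains all commutators of elements of bounded support (`comm_mem_normal`). Hence the intersection
`core Γ` of the nontrivial normal subgroups, which every automorphism preserves, contains these
commutators; it consists of elements of bounded support because those form a nontrivial normal
subgroup.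

*Disjointness is algebraic.* Let `f` have bounded support. An element of bounded support commuting
with `f` fixes the endpoints of every component of `supp f` (infinitely many components would
accumulate at a point near which `f` is not affine), and on such a component it is determined by its
germ at the left endpoint, since `f` or `f⁻¹` contracts towards that endpoint. Linear germs commute,
so commutators of elements of the centralizer are trivial on `supp f` (`centralizer_comm`), while
outside `supp f` they are still plentiful. An element therefore commutes with all of them if and
only if it fixes the interior of the fixed set of `f`. From this, having disjoint supports becomes
a group-theoretic relation on the core, preserved by automorphisms (`algDisj_iff`, `map_disj`).

*Points.* Given an automorphism `α` and a point `x`, intersect the closures of `supp (α f)` over all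
`f` in the core that move `x`. By compactness the intersection is nonempty. If it contained
`y < y'`, then any `j` in the core with `α j` trivial near `y` or near `y'` would fix `x`
(`fix_of_germ`). Such elements generate the core, which has no fixed point, a contradiction. The
resulting map `h` satisfies `h (g x) = α g (h x)` for all `g ∈ Γ`; the map built from `α⁻¹` inverts
it because only the identity commutes with the action, and `h` is a homeomorphism because supports
form a base of the topology. Uniqueness also follows from the triviality of the commutant.
-/

noncomputable section

/-- Membership in `P̃Lₙ(ℝ)`: as `PLₙ(ℝ)` but allowing orientation-reversing elements,
so slopes are `± nᵏ`. -/
def MemPLt (n : ℕ) (f : ℝ → ℝ) : Prop :=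
  (StrictMono f ∨ StrictAnti f) ∧ Function.Surjective f ∧
  (∃ B : Set ℝ, B ⊆ zpows n ∧ LocDiscrete B ∧
    ∀ x ∉ B, ∃ (k : ℤ) (s c : ℝ), (s = (n : ℝ) ^ k ∨ s = -((n : ℝ) ^ k)) ∧
      ∃ ε > 0, ∀ y : ℝ, |y - x| < ε → f y = s * y + c) ∧
  (∀ q ∈ zpows n, f q ∈ zpows n)

/-- The normalizer `N(G)` of a subgroup `G` of `Perm ℝ` inside `Homeo(ℝ)`: the
homeomorphisms `h` of `ℝ` with `h G h⁻¹ = G`. -/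
def NormSet (G : Subgroup (Equiv.Perm ℝ)) : Set (Equiv.Perm ℝ) :=
  {h : Equiv.Perm ℝ | Continuous ⇑h ∧ Continuous ⇑h.symm ∧
    ∀ f : Equiv.Perm ℝ, f ∈ G ↔ h * f * h⁻¹ ∈ G}

namespace PLAut

open Filter Topology
open scoped commutatorElement

/-! ### Group actions on the line -/

section Action

variable {Γ : Type*} [Group Γ] [MulAction Γ ℝ]

/-- `g` has bounded support: it fixes every point outside some compact set. -/
def Bd (g : Γ) : Prop := ∃ K : Set ℝ, IsCompact K ∧ ∀ x ∉ K, g • x = x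

/-- The set `P` of group elements contains, for every point `u` of every open set `U`, an element
supported in `U` which moves `u`. -/
def Rich (P : Γ → Prop) : Prop :=
  ∀ U : Set ℝ, IsOpen U → ∀ u ∈ U, ∃ f, P f ∧ (∀ x ∉ U, f • x = x) ∧ f • u ≠ u

variable (Γ) in
/-- The features of a group `BPLₙ(ℝ) ⊆ G ⊆ P̃Lₙ(ℝ)` on which the reconstruction rests: `Γ` acts
faithfully by monotone or antitone bijections of `ℝ` that are affine on either side of every point
(the right germ includes the base point), and its elements of bounded support are plentiful. -/
structure GoodAction : Prop where
  faithful : ∀ g : Γ, (∀ x : ℝ, g • x = x) → g = 1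
  mono : ∀ g : Γ, StrictMono (fun x : ℝ => g • x) ∨ StrictAnti (fun x : ℝ => g • x)
  right : ∀ (g : Γ) (a : ℝ), ∃ ε > 0, ∃ s : ℝ, ∀ y, a ≤ y → y < a + ε → g • y = g • a + s * (y - a)
  left : ∀ (g : Γ) (a : ℝ), ∃ ε > 0, ∃ s c : ℝ, ∀ y, a - ε < y → y < a → g • y = s * y + c
  rich : Rich (Bd : Γ → Prop)
  pushR : ∀ y u v : ℝ, y < u → ∃ f : Γ, Bd f ∧ (∀ x ≤ y, f • x = x) ∧ v < f • u
  pushL : ∀ u v z : ℝ, v < z → ∃ f : Γ, Bd f ∧ (∀ x ≥ z, f • x = x) ∧ v < f • u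

theorem fix_inv {g : Γ} {x : ℝ} (h : g • x = x) : g⁻¹ • x = x := by
  rw [inv_smul_eq_iff, h]

theorem fix_inv_iff {g : Γ} {x : ℝ} : g⁻¹ • x = x ↔ g • x = x := by
  rw [inv_smul_eq_iff, eq_comm]

theorem fix_comm {a b : Γ} {x : ℝ} (ha : a • x = x) (hb : b • x = x) : ⁅a, b⁆ • x = x := by
  rw [commutatorElement_def, mul_smul, mul_smul, mul_smul, fix_inv hb, fix_inv ha, hb, ha]

theorem fix_conj {k f : Γ} {x : ℝ} : (k * f * k⁻¹) • x = x ↔ f • (k⁻¹ • x) = k⁻¹ • x := by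
  rw [mul_smul, mul_smul, smul_eq_iff_eq_inv_smul]

/-- If `c` moves `u`, and `g` sends `u` outside a set supporting `c`, then `g` and `c` do not
commute. -/
theorem not_commute {g c : Γ} {V : Set ℝ} {u : ℝ} (hc : ∀ x ∉ V, c • x = x) (hu : c • u ≠ u)
    (hg : g • u ∉ V) : ¬ Commute g c := by
  intro h
  apply hu
  have h1 : (g * c) • u = (c * g) • u := by rw [h.eq]
  rw [mul_smul, mul_smul, hc _ hg] at h1
  exact (MulAction.injective g) h1

/-- The commutators of a rich family again form a rich family. -/
theorem Rich.comm {P : Γ → Prop} (hP : Rich P) (hc : ∀ f, P f → Continuous fun x : ℝ => f • x)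
    {U : Set ℝ} (hU : IsOpen U) {u : ℝ} (hu : u ∈ U) :
    ∃ a b, P a ∧ P b ∧ (∀ x ∉ U, a • x = x) ∧ (∀ x ∉ U, b • x = x) ∧ ⁅a, b⁆ • u ≠ u := by
  obtain ⟨a, ha, haU, hau⟩ := hP U hU u hu
  obtain ⟨V, W, hV, hW, huV, huW, hVW⟩ := t2_separation hau
  obtain ⟨b, hb, hbV, hbu⟩ := hP (W ∩ (fun x : ℝ => a • x) ⁻¹' V ∩ U)
    ((hW.inter (hV.preimage (hc a ha))).inter hU) u ⟨⟨huW, huV⟩, hu⟩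
  refine ⟨a, b, ha, hb, haU, fun x hx => hbV x fun h => hx h.2, ?_⟩
  have hbi : b⁻¹ • u ∈ W ∩ (fun x : ℝ => a • x) ⁻¹' V ∩ U := by
    by_contra h
    have h1 := hbV _ h
    rw [smul_inv_smul] at h1
    exact hbu (fix_inv_iff.1 h1.symm)
  -- `a⁻¹ • b⁻¹ • u` leaves the support of `b`, so the commutator maps `u` to `b⁻¹ • u`.
  have h2 : b • (a⁻¹ • (b⁻¹ • u)) = a⁻¹ • (b⁻¹ • u) := by
    apply hbV
    rintro ⟨⟨-, h3⟩, -⟩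
    simp only [Set.mem_preimage, smul_inv_smul] at h3
    exact Set.disjoint_left.1 hVW h3 hbi.1.1
  rw [commutatorElement_def, mul_smul, mul_smul, mul_smul, h2, smul_inv_smul]
  exact fun h => hbu (fix_inv_iff.1 h)

theorem Bd.inv {g : Γ} (h : Bd g) : Bd g⁻¹ := by
  obtain ⟨K, hK, h⟩ := h
  exact ⟨K, hK, fun x hx => fix_inv (h x hx)⟩

theorem Bd.mul {g k : Γ} (h : Bd g) (h' : Bd k) : Bd (g * k) := by
  obtain ⟨K, hK, h⟩ := h
  obtain ⟨L, hL, h'⟩ := h'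
  refine ⟨K ∪ L, hK.union hL, fun x hx => ?_⟩
  rw [mul_smul, h' x fun h => hx (.inr h), h x fun h => hx (.inl h)]

theorem Bd.bound {g : Γ} (h : Bd g) : ∃ M : ℝ, 0 < M ∧ ∀ x, M < |x| → g • x = x := by
  obtain ⟨K, hK, h⟩ := h
  obtain ⟨M, hM, hM'⟩ := hK.isBounded.exists_pos_norm_le
  exact ⟨M, hM, fun x hx => h x fun hxK => absurd (hM' x hxK) (not_le.2 hx)⟩

/-- Iterates of a continuous monotone map which moves `u` to the right get past any `v` such that
the map has no fixed point in `[u, v]`. -/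
theorem exists_iterate_gt {f : ℝ → ℝ} (hf : Continuous f) (hm : Monotone f) {u v : ℝ}
    (hu : u ≤ f u) (hfix : ∀ y, u ≤ y → y ≤ v → f y ≠ y) : ∃ m : ℕ, v < f^[m] u := by
  by_contra! H
  have hmono : Monotone fun m => f^[m] u := hm.monotone_iterate_of_le_map hu
  have hb : BddAbove (Set.range fun m => f^[m] u) := ⟨v, by rintro _ ⟨m, rfl⟩; exact H m⟩
  have hfp := isFixedPt_of_tendsto_iterate (tendsto_atTop_ciSup hmono hb) hf.continuousAt
  exact hfix _ (le_ciSup hb 0) (ciSup_le H) hfp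

theorem exists_iterate_lt {f : ℝ → ℝ} (hf : Continuous f) (hm : Monotone f) {u v : ℝ}
    (hu : f u ≤ u) (hfix : ∀ y, y ≤ u → v ≤ y → f y ≠ y) : ∃ m : ℕ, f^[m] u < v := by
  by_contra! H
  have hmono : Antitone fun m => f^[m] u := hm.antitone_iterate_of_map_le hu
  have hb : BddBelow (Set.range fun m => f^[m] u) := ⟨v, by rintro _ ⟨m, rfl⟩; exact H m⟩
  have hfp := isFixedPt_of_tendsto_iterate (tendsto_atTop_ciInf hmono hb) hf.continuousAt
  exact hfix _ (ciInf_le hb 0) (le_ciInf H) hfp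

namespace GoodAction

variable (hΓ : GoodAction Γ)
include hΓ

theorem cont (g : Γ) : Continuous fun x : ℝ => g • x := by
  have hs : Function.Surjective fun x : ℝ => g • x := MulAction.surjective g
  rcases hΓ.mono g with h | h
  · exact h.monotone.continuous_of_surjective hs
  · have h1 : Continuous fun x : ℝ => -(g • x) :=
      Monotone.continuous_of_surjective (fun x y hxy => neg_le_neg (h.antitone hxy))
        (fun y => by obtain ⟨x, hx⟩ := hs (-y); exact ⟨x, by simp only at hx; simp [hx]⟩)
    exact h1.neg.congr fun x => neg_neg _

theorem isClosed_fix (g : Γ) : IsClosed {x : ℝ | g • x = x} :=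
  isClosed_eq (hΓ.cont g) continuous_id

theorem eq_of_smul {g k : Γ} (h : ∀ x : ℝ, g • x = k • x) : g = k := by
  have := hΓ.faithful (k⁻¹ * g) fun x => by rw [mul_smul, h, inv_smul_smul]
  rwa [inv_mul_eq_one, eq_comm] at this

theorem commute_of_disjoint {a b : Γ} (h : ∀ x : ℝ, a • x = x ∨ b • x = x) : Commute a b := by
  refine hΓ.eq_of_smul fun x => ?_
  rw [mul_smul, mul_smul]
  have key : ∀ {a b : Γ}, (∀ x : ℝ, a • x = x ∨ b • x = x) → a • x = x → a • b • x = b • a • x := by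
    intro a b h ha
    rw [ha]
    rcases h (b • x) with h1 | h1
    · exact h1
    · rw [MulAction.injective b h1, ha]
  rcases h x with h1 | h1
  · exact key h h1
  · exact (key (fun y => (h y).symm) h1).symm

theorem bd_mono {g : Γ} (hg : Bd g) : StrictMono fun x : ℝ => g • x := by
  rcases hΓ.mono g with h | h
  · exact h
  · exfalso
    obtain ⟨M, hM, hM'⟩ := hg.bound
    have h1 := hM' (M + 1) (by rw [abs_of_pos] <;> linarith)
    have h2 := hM' (M + 2) (by rw [abs_of_pos] <;> linarith)
    have h3 : g • (M + 2) < g • (M + 1) := h (by linarith)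
    linarith

theorem bd_conj {f : Γ} (hf : Bd f) (g : Γ) : Bd (g * f * g⁻¹) := by
  obtain ⟨K, hK, h⟩ := hf
  refine ⟨(fun x : ℝ => g • x) '' K, hK.image (hΓ.cont g), fun x hx => ?_⟩
  rw [fix_conj]
  exact h _ fun h1 => hx ⟨_, h1, smul_inv_smul _ _⟩

theorem pushDown {y c M : ℝ} (h : y < c) :
    ∃ f : Γ, Bd f ∧ (∀ x ≤ y, f • x = x) ∧ f • M < c := by
  obtain ⟨f, hf, h1, h2⟩ := hΓ.pushR y c M h
  refine ⟨f⁻¹, hf.inv, fun x hx => fix_inv (h1 x hx), ?_⟩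
  have := hΓ.bd_mono hf.inv h2
  simpa using this

/-! ### Centralizers act commutatively on supports -/

/-- If `f` moves `x` and `a` is the largest fixed point of `f` to the left of `x`, then every
`h` of bounded support in the centralizer of `f` satisfies `h • a ≤ a`. Otherwise the points
`hᵏ • a` would be fixed points of `f` increasing to a limit, separated by the points `hᵏ • x` moved
by `f`, and `f` would not be affine to the left of the limit. -/
theorem centralizer_le {f h : Γ} (hh : Bd h) (hfh : Commute f h) {a x : ℝ}
    (ha : f • a = a) (hx : f • x ≠ x) (hax : a < x)
    (hno : ∀ y, a < y → y ≤ x → f • y ≠ y) : h • a ≤ a := by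
  by_contra! hlt
  have hk : ∀ k : ℕ, StrictMono fun x : ℝ => h ^ k • x := by
    intro k
    rw [← smul_iterate]
    exact (hΓ.bd_mono hh).iterate k
  have hcomm : ∀ (k : ℕ) (y : ℝ), f • h ^ k • y = h ^ k • f • y := by
    intro k y
    rw [← mul_smul, (hfh.pow_right k).eq, mul_smul]
  have hxa : x < h • a := by
    by_contra! hle
    refine hno _ hlt hle ?_
    have := hcomm 1 a
    rwa [pow_one, ha] at this
  have hs : ∀ k : ℕ, h ^ (k + 1) • a = h ^ k • h • a := fun k => by rw [pow_succ, mul_smul]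
  have hmono : StrictMono fun k : ℕ => h ^ k • a := strictMono_nat_of_lt_succ fun k => by
    rw [hs]; exact hk k hlt
  obtain ⟨M, -, hM⟩ := hh.bound
  have hb : BddAbove (Set.range fun k : ℕ => h ^ k • a) := by
    refine ⟨max |a| (|M| + 1), ?_⟩
    rintro _ ⟨k, rfl⟩
    have h1 : h • max |a| (|M| + 1) = max |a| (|M| + 1) := by
      apply hM
      have := le_max_right |a| (|M| + 1)
      have h2 := le_abs_self (max |a| (|M| + 1))
      have h3 := le_abs_self M
      linarith
    have h2 : h ^ k • max |a| (|M| + 1) = max |a| (|M| + 1) := by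
      rw [← smul_iterate_apply]
      exact Function.iterate_fixed h1 k
    rw [← h2]
    exact (hk k).monotone ((le_abs_self a).trans (le_max_left _ _))
  have hlim := tendsto_atTop_ciSup hmono.monotone hb
  set p := ⨆ k : ℕ, h ^ k • a
  have hlt : ∀ k : ℕ, h ^ k • a < p := fun k =>
    (hmono (Nat.lt_succ_self k)).trans_le (le_ciSup hb (k + 1))
  obtain ⟨ε, hε, s, c, hsc⟩ := hΓ.left f p
  obtain ⟨k, hkε⟩ := (hlim.eventually (lt_mem_nhds (show p - ε < p by linarith))).exists
  have h1 : h ^ k • a < h ^ k • x := hk k hax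
  have h2 : h ^ k • x < h ^ (k + 1) • a := by rw [hs]; exact hk k hxa
  have e1 := hsc _ hkε (hlt k)
  have e2 := hsc _ (hkε.trans (h1.trans h2)) (hlt (k + 1))
  have e3 := hsc _ (hkε.trans h1) (h2.trans (hlt (k + 1)))
  rw [hcomm, ha] at e1 e2
  have hs1 : s = 1 := by
    have : (s - 1) * (h ^ (k + 1) • a - h ^ k • a) = 0 := by linarith
    rcases mul_eq_zero.1 this with h | h <;> linarith
  subst hs1
  rw [hcomm] at e3
  exact hx ((hk k).injective (show h ^ k • f • x = h ^ k • x by linarith))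

theorem centralizer_comm_aux {f h k : Γ} (hf : Bd f) (hh : Bd h) (hk : Bd k) (hfh : Commute f h)
    (hfk : Commute f k) {x : ℝ} (hx : f • x < x) : h • k • x = k • h • x := by
  let S : Set ℝ := {y | f • y = y} ∩ Set.Iic x
  have hSne : S.Nonempty := by
    obtain ⟨M, hM, hM'⟩ := hf.bound
    refine ⟨min x (-M - 1), hM' _ ?_, Set.mem_Iic.2 (min_le_left _ _)⟩
    have := min_le_right x (-M - 1)
    have h2 := neg_abs_le (min x (-M - 1))
    linarith
  have hSb : BddAbove S := ⟨x, fun y hy => hy.2⟩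
  have hScl : IsClosed S := (hΓ.isClosed_fix f).inter isClosed_Iic
  have haS : sSup S ∈ S := hScl.csSup_mem hSne hSb
  set a := sSup S
  have ha : f • a = a := haS.1
  have hax : a < x := lt_of_le_of_ne haS.2 fun h => hx.ne (h ▸ ha)
  have hno : ∀ y, a < y → y ≤ x → f • y ≠ y := fun y h1 h2 h3 =>
    absurd (le_csSup hSb ⟨h3, h2⟩) (not_le.2 h1)
  have hfix : ∀ {g : Γ}, Bd g → Commute f g → g • a = a := by
    intro g hg hfg
    refine le_antisymm (hΓ.centralizer_le hg hfg ha hx.ne hax hno) ?_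
    have h1 := hΓ.centralizer_le hg.inv hfg.inv_right ha hx.ne hax hno
    have h2 := (hΓ.bd_mono hg).monotone h1
    simpa using h2
  have hha := hfix hh hfh
  have hka := hfix hk hfk
  obtain ⟨ε, hε, s, hs⟩ := hΓ.right h a
  obtain ⟨δ, hδ, t, ht⟩ := hΓ.right k a
  rw [hha] at hs
  rw [hka] at ht
  -- Near `a` both maps are affine with the common fixed point `a`, so there they commute.
  have hnear : ∀ᶠ y in 𝓝 a, a ≤ y → h • k • y = k • h • y := by
    have c1 := (hΓ.cont h).continuousAt (x := a) |>.eventually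
      (gt_mem_nhds (show h • a < a + δ by rw [hha]; linarith))
    have c2 := (hΓ.cont k).continuousAt (x := a) |>.eventually
      (gt_mem_nhds (show k • a < a + ε by rw [hka]; linarith))
    have c3 := gt_mem_nhds (show a < a + ε by linarith)
    have c4 := gt_mem_nhds (show a < a + δ by linarith)
    filter_upwards [c1, c2, c3, c4] with y y1 y2 y3 y4 hay
    have m1 : a ≤ h • y := by
      rw [← hha]; exact (hΓ.bd_mono hh).monotone hay
    have m2 : a ≤ k • y := by
      rw [← hka]; exact (hΓ.bd_mono hk).monotone hay
    rw [hs _ m2 y2, ht _ m1 y1, hs _ hay y3, ht _ hay y4]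
    ring
  obtain ⟨l, u, ⟨hla, hau⟩, hlu⟩ := mem_nhds_iff_exists_Ioo_subset.1 hnear
  obtain ⟨m, hm⟩ := exists_iterate_lt (v := u) (hΓ.cont f) (hΓ.bd_mono hf).monotone hx.le
    fun y h1 h2 => hno y (hau.trans_le h2) h1
  rw [smul_iterate_apply] at hm
  have ham : a ≤ f ^ m • x := by
    have h1 : f ^ m • a = a := by
      rw [← smul_iterate_apply]
      exact Function.iterate_fixed ha m
    have h2 := ((hΓ.bd_mono hf).iterate m).monotone hax.le
    rw [smul_iterate] at h2
    simpa only [h1] using h2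
  have key := hlu ⟨hla.trans_le ham, hm⟩ ham
  apply MulAction.injective (f ^ m)
  have e : ∀ {g : Γ}, Commute f g → ∀ y : ℝ, g • f ^ m • y = f ^ m • g • y := by
    intro g hg y
    rw [← mul_smul, ← (hg.pow_left m).eq, mul_smul]
  rwa [e hfk, e hfh, e hfh, e hfk] at key

/-- Elements of bounded support in the centralizer of `f` commute with one another on the
support of `f`: a germ at the left endpoint of a component of the support determines them. -/
theorem centralizer_comm {f h k : Γ} (hf : Bd f) (hh : Bd h) (hk : Bd k) (hfh : Commute f h)
    (hfk : Commute f k) {x : ℝ} (hx : f • x ≠ x) : ⁅h, k⁆ • x = x := by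
  have main : ∀ {h k : Γ}, Bd h → Bd k → Commute f h → Commute f k → h • k • x = k • h • x := by
    intro h k hh hk hfh hfk
    rcases lt_or_gt_of_ne hx with h1 | h1
    · exact hΓ.centralizer_comm_aux hf hh hk hfh hfk h1
    · have h2 : f⁻¹ • x < x := by
        have := hΓ.bd_mono hf.inv h1
        simpa using this
      exact hΓ.centralizer_comm_aux hf.inv hh hk hfh.inv_left hfk.inv_left h2
  rw [commutatorElement_def, mul_smul, mul_smul, mul_smul,
    main hh.inv hk.inv hfh.inv_right hfk.inv_right, ← mul_smul k, mul_inv_cancel, one_smul,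
    smul_inv_smul]

/-! ### The smallest nontrivial normal subgroup -/

/-- Elements of bounded support move any compact interval into any open interval. -/
theorem compress {c d M : ℝ} (hcd : c < d) :
    ∃ t : Γ, Bd t ∧ ∀ x, |x| ≤ M → c < t • x ∧ t • x < d := by
  obtain ⟨e, hce, hed⟩ := exists_between hcd
  obtain ⟨f, hf, -, hf'⟩ := hΓ.pushDown (M := M) hce
  obtain ⟨g, hg, hg', hg''⟩ := hΓ.pushL (f • (-M)) c e (by linarith)
  refine ⟨g * f, hg.mul hf, fun x hx => ?_⟩
  obtain ⟨h1, h2⟩ := abs_le.1 hx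
  have m1 : f • (-M) ≤ f • x := (hΓ.bd_mono hf).monotone h1
  have m2 : f • x ≤ f • M := (hΓ.bd_mono hf).monotone h2
  have m3 : g • f • (-M) ≤ g • f • x := (hΓ.bd_mono hg).monotone m1
  have m4 : g • f • x ≤ g • e := (hΓ.bd_mono hg).monotone (m2.trans hf'.le)
  rw [hg' e le_rfl] at m4
  rw [mul_smul]
  exact ⟨hg''.trans_le m3, m4.trans_lt hed⟩

/-- Every nontrivial normal subgroup contains the commutators of elements of bounded support
(Higman's argument: after conjugation the supports lie in an interval moved off itself by an
element of the subgroup). -/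
theorem comm_mem_normal {N : Subgroup Γ} (hN : N.Normal) (hN1 : N ≠ ⊥) {a b : Γ} (ha : Bd a)
    (hb : Bd b) : ⁅a, b⁆ ∈ N := by
  obtain ⟨g, hgN, hg1⟩ := (Subgroup.ne_bot_iff_exists_ne_one.1 hN1 : ∃ g : N, g ≠ 1) |>.elim
    fun g hg => (⟨g.1, g.2, fun h => hg (Subtype.ext h)⟩ : ∃ g : Γ, g ∈ N ∧ g ≠ 1)
  obtain ⟨x, hx⟩ : ∃ x : ℝ, g • x ≠ x := by
    by_contra! h
    exact hg1 (hΓ.faithful g h)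
  obtain ⟨V, W, hV, hW, hxV, hxW, hVW⟩ := t2_separation hx
  obtain ⟨c, d, ⟨hcx, hxd⟩, hcd⟩ := mem_nhds_iff_exists_Ioo_subset.1
    (((hV.preimage (hΓ.cont g)).inter hW).mem_nhds ⟨hxV, hxW⟩)
  have hoff : ∀ y ∈ Set.Ioo c d, g • y ∉ Set.Ioo c d := fun y hy hy' =>
    Set.disjoint_left.1 hVW (hcd hy).1 (hcd hy').2
  obtain ⟨M, hM, hMa⟩ := ha.bound
  obtain ⟨L, hL, hLb⟩ := hb.bound
  obtain ⟨t, ht, htI⟩ := hΓ.compress (M := max M L) (hcx.trans hxd)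
  -- the conjugates of `a` and `b` by `t` are supported in `(c, d)`
  have hsupp : ∀ {f : Γ}, (∀ x : ℝ, max M L < |x| → f • x = x) →
      ∀ y ∉ Set.Ioo c d, (t * f * t⁻¹) • y = y := by
    intro f hf y hy
    rw [fix_conj]
    apply hf
    by_contra! h
    have := htI _ h
    rw [smul_inv_smul] at this
    exact hy this
  have hA := hsupp (f := a) fun x hx => hMa x ((le_max_left _ _).trans_lt hx)
  have hB := hsupp (f := b) fun x hx => hLb x ((le_max_right _ _).trans_lt hx)
  set A := t * a * t⁻¹
  set B := t * b * t⁻¹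
  have hdis : ∀ x : ℝ, (g * A⁻¹ * g⁻¹) • x = x ∨ B • x = x := by
    intro x
    by_cases hx : x ∈ Set.Ioo c d
    · left
      rw [fix_conj]
      refine fix_inv (hA _ fun h => ?_)
      exact hoff _ h (by rwa [smul_inv_smul])
    · exact .inr (hB x hx)
  have hcomm := hΓ.commute_of_disjoint hdis
  have hmem : ⁅⁅A, g⁆, B⁆ ∈ N := by
    have h1 : ⁅A, g⁆ ∈ N := by
      rw [commutatorElement_def]
      exact N.mul_mem (hN.conj_mem g hgN A) (N.inv_mem hgN)
    rw [commutatorElement_def, mul_assoc, mul_assoc]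
    refine N.mul_mem h1 ?_
    rw [← mul_assoc]
    exact hN.conj_mem _ (N.inv_mem h1) B
  have heq : ⁅⁅A, g⁆, B⁆ = ⁅A, B⁆ := by
    have h1 : ⁅A, g⁆ = A * (g * A⁻¹ * g⁻¹) := by rw [commutatorElement_def]; group
    rw [h1]
    generalize g * A⁻¹ * g⁻¹ = e at hcomm
    rw [commutatorElement_def, commutatorElement_def, mul_assoc A e B, hcomm.eq]
    group
  rw [heq] at hmem
  have h2 := hN.conj_mem _ hmem t⁻¹
  have h3 : t⁻¹ * ⁅A, B⁆ * t⁻¹⁻¹ = ⁅a, b⁆ := by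
    simp only [A, B, commutatorElement_def]; group
  rwa [h3] at h2

omit hΓ
variable (Γ) in
/-- The intersection of all nontrivial normal subgroups. For a good action it is itself nontrivial
and consists of elements of bounded support. -/
def core : Subgroup Γ := sInf {N | N.Normal ∧ N ≠ ⊥}

omit [MulAction Γ ℝ] in
theorem map_core (α : MulAut Γ) {f : Γ} (hf : f ∈ core Γ) : α f ∈ core Γ := by
  refine Subgroup.mem_sInf.2 fun N hN => ?_
  have hN' : N.comap α.toMonoidHom ∈ {N : Subgroup Γ | N.Normal ∧ N ≠ ⊥} := by
    refine ⟨hN.1.comap _, fun h => hN.2 ?_⟩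
    rw [eq_bot_iff]
    intro x hx
    have h1 : α.symm x ∈ N.comap α.toMonoidHom := by simpa using hx
    rw [h, Subgroup.mem_bot] at h1
    simpa using h1
  exact Subgroup.mem_sInf.1 hf _ hN'

omit [MulAction Γ ℝ] in
theorem conj_core {f : Γ} (hf : f ∈ core Γ) (g : Γ) : g * f * g⁻¹ ∈ core Γ :=
  map_core (MulAut.conj g) hf

include hΓ

theorem core_bd {f : Γ} (hf : f ∈ core Γ) : Bd f := by
  let B : Subgroup Γ :=
    { carrier := {f | Bd f}
      mul_mem' := Bd.mul
      one_mem' := ⟨∅, isCompact_empty, fun x _ => one_smul _ x⟩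
      inv_mem' := Bd.inv }
  refine Subgroup.mem_sInf.1 hf B ⟨⟨fun f hf g => hΓ.bd_conj hf g⟩, fun h => ?_⟩
  obtain ⟨f, hf, -, hf0⟩ := hΓ.rich Set.univ isOpen_univ 0 trivial
  have h1 : f ∈ B := hf
  rw [h, Subgroup.mem_bot] at h1
  exact hf0 (by rw [h1, one_smul])

theorem comm_mem_core {a b : Γ} (ha : Bd a) (hb : Bd b) : ⁅a, b⁆ ∈ core Γ :=
  Subgroup.mem_sInf.2 fun _ hN => hΓ.comm_mem_normal hN.1 hN.2 ha hb

theorem core_rich : Rich fun f : Γ => f ∈ core Γ := by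
  intro U hU u hu
  obtain ⟨a, b, ha, hb, haU, hbU, hne⟩ := hΓ.rich.comm (fun f _ => hΓ.cont f) hU hu
  exact ⟨⁅a, b⁆, hΓ.comm_mem_core ha hb, fun x hx => fix_comm (haU x hx) (hbU x hx), hne⟩

/-- The core contains elements fixing `(-∞, y]` pointwise and moving `M` below `c`. -/
theorem core_push {y c M : ℝ} (h : y < c) :
    ∃ s ∈ core Γ, (∀ x ≤ y, s • x = x) ∧ s • M < c := by
  obtain ⟨p, hyp, hpc⟩ := exists_between h
  obtain ⟨g, hg, hgp, hgM⟩ := hΓ.pushDown (M := M) hpc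
  obtain ⟨f, hf, hfy, hfM⟩ := hΓ.pushR y p (max M p) hyp
  -- `f` moves the support of `g` beyond `M`, so `⁅g, f⁆ • M = g • M`.
  have hfix : ∀ x ≤ max M p, (f * g⁻¹ * f⁻¹) • x = x := by
    intro x hx
    rw [fix_conj]
    refine fix_inv (hgp _ ?_)
    by_contra! h1
    have h2 : f • p < f • f⁻¹ • x := hΓ.bd_mono hf h1
    rw [smul_inv_smul] at h2
    linarith
  have heq : ⁅g, f⁆ = g * (f * g⁻¹ * f⁻¹) := by rw [commutatorElement_def]; group
  refine ⟨⁅g, f⁆, hΓ.comm_mem_core hg hf, fun x hx => ?_, ?_⟩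
  · rw [heq, mul_smul, hfix x (hx.trans (hyp.le.trans (le_max_right _ _))),
      hgp x (hx.trans hyp.le)]
  · rwa [heq, mul_smul, hfix M (le_max_left _ _)]

/-! ### Disjointness of supports is an algebraic relation -/

omit hΓ

/-- `k` centralizes all commutators of elements of the core commuting with `f`. For `f` in the core
this says that `k` fixes the interior of the fixed set of `f` pointwise. -/
def AlgSub (f k : Γ) : Prop :=
  ∀ a ∈ core Γ, ∀ b ∈ core Γ, Commute f a → Commute f b → Commute k ⁅a, b⁆

/-- `g` centralizes every `k` in the core with `AlgSub f k`. For `f` in the core this says that the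
supports of `f` and `g` are disjoint. -/
def AlgDisj (f g : Γ) : Prop := ∀ k ∈ core Γ, AlgSub f k → Commute g k

omit [MulAction Γ ℝ] in
theorem AlgSub.map (α : MulAut Γ) {f k : Γ} (h : AlgSub f k) : AlgSub (α f) (α k) := by
  intro a ha b hb hfa hfb
  have h1 := h (α.symm a) (map_core α.symm ha) (α.symm b) (map_core α.symm hb)
    (by simpa using hfa.map α.symm) (by simpa using hfb.map α.symm)
  simpa [commutatorElement_def] using h1.map α

omit [MulAction Γ ℝ] in
theorem AlgDisj.map (α : MulAut Γ) {f k : Γ} (h : AlgDisj f k) : AlgDisj (α f) (α k) := by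
  intro g hg hfg
  have h1 := h (α.symm g) (map_core α.symm hg) (by simpa using hfg.map α.symm)
  simpa using h1.map α

include hΓ

theorem algSub_iff {f k : Γ} (hf : f ∈ core Γ) :
    AlgSub f k ↔ ∀ U : Set ℝ, IsOpen U → (∀ u ∈ U, f • u = u) → ∀ u ∈ U, k • u = u := by
  constructor
  · intro h U hU hfU u hu
    by_contra hne
    obtain ⟨a, b, ha, hb, haU, hbU, hab⟩ := hΓ.core_rich.comm (fun f _ => hΓ.cont f)
      (hU.inter (isOpen_compl_singleton (x := k • u))) ⟨hu, Ne.symm hne⟩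
    have hcom : ∀ {a : Γ}, (∀ x ∉ U ∩ {k • u}ᶜ, a • x = x) → Commute f a := by
      intro a haU
      refine hΓ.commute_of_disjoint fun x => ?_
      by_cases hx : x ∈ U
      · exact .inl (hfU x hx)
      · exact .inr (haU x fun h => hx h.1)
    exact not_commute (fun x hx => fix_comm (haU x hx) (hbU x hx)) hab (fun h => h.2 rfl)
      (h a ha b hb (hcom haU) (hcom hbU))
  · intro h a ha b hb hfa hfb
    refine hΓ.commute_of_disjoint fun x => ?_
    by_cases hx : ⁅a, b⁆ • x = x
    · exact .inr hx
    · refine .inl (h {x : ℝ | ⁅a, b⁆ • x = x}ᶜ (hΓ.isClosed_fix _).isOpen_compl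
        (fun u hu => ?_) x hx)
      by_contra hfu
      exact hu (hΓ.centralizer_comm (hΓ.core_bd hf) (hΓ.core_bd ha) (hΓ.core_bd hb) hfa hfb hfu)

theorem algDisj_iff {f g : Γ} (hf : f ∈ core Γ) :
    AlgDisj f g ↔ ∀ x : ℝ, f • x = x ∨ g • x = x := by
  constructor
  · intro h x
    by_contra! hx
    obtain ⟨k, hk, hkU, hkx⟩ := hΓ.core_rich ({x : ℝ | f • x = x}ᶜ ∩ {g • x}ᶜ)
      ((hΓ.isClosed_fix _).isOpen_compl.inter isOpen_compl_singleton) x ⟨hx.1, Ne.symm hx.2⟩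
    refine not_commute hkU hkx (fun h => h.2 rfl) (h k hk ?_)
    exact (hΓ.algSub_iff hf).2 fun U _ hfU u hu => hkU u fun h => h.1 (hfU u hu)
  · intro h k hk hfk
    refine hΓ.commute_of_disjoint fun x => ?_
    by_cases hx : g • x = x
    · exact .inl hx
    · refine .inr ((hΓ.algSub_iff hf).1 hfk {x : ℝ | g • x = x}ᶜ
        (hΓ.isClosed_fix _).isOpen_compl (fun u hu => ?_) x hx)
      exact (h u).resolve_right hu

theorem map_disj (α : MulAut Γ) {f g : Γ} (hf : f ∈ core Γ)
    (h : ∀ x : ℝ, f • x = x ∨ g • x = x) (x : ℝ) : α f • x = x ∨ α g • x = x :=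
  (hΓ.algDisj_iff (map_core α hf)).1 (((hΓ.algDisj_iff hf).2 h).map α) x

/-! ### The conjugating homeomorphism -/

omit hΓ
/-- The points corresponding to `x` under the automorphism `α`: those in the closure of the support
of `α f` for every `f` in the core that moves `x`. -/
def fiber (α : MulAut Γ) (x : ℝ) : Set ℝ :=
  ⋂ f : {f : Γ // f ∈ core Γ ∧ f • x ≠ x}, closure {z : ℝ | α f • z ≠ z}

include hΓ

/-- `supp g ⊆ supp f` implies `supp (α g) ⊆ closure (supp (α f))`. -/
theorem closure_supp_subset (α : MulAut Γ) {f g : Γ}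
    (h : ∀ x : ℝ, f • x = x → g • x = x) :
    closure {z : ℝ | α g • z ≠ z} ⊆ closure {z : ℝ | α f • z ≠ z} := by
  refine closure_minimal (fun z hz => ?_) isClosed_closure
  by_contra hzc
  obtain ⟨k, hk, hkU, hkz⟩ := hΓ.core_rich _ isClosed_closure.isOpen_compl z hzc
  have h1 : ∀ x : ℝ, k • x = x ∨ α f • x = x := by
    intro x
    by_cases hx : α f • x = x
    · exact .inr hx
    · exact .inl (hkU x fun h => h (subset_closure hx))
  have h2 : ∀ x : ℝ, α.symm k • x = x ∨ g • x = x := by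
    intro x
    have := hΓ.map_disj α.symm hk h1 x
    simp only [MulEquiv.symm_apply_apply] at this
    exact this.imp_right (h x)
  have h3 := hΓ.map_disj α (map_core α.symm hk) h2 z
  simp only [MulEquiv.apply_symm_apply] at h3
  exact h3.elim hkz hz

theorem fiber_nonempty (α : MulAut Γ) (x : ℝ) : (fiber α x).Nonempty := by
  have : Nonempty {f : Γ // f ∈ core Γ ∧ f • x ≠ x} := by
    obtain ⟨f, hf, -, hfx⟩ := hΓ.core_rich Set.univ isOpen_univ x trivial
    exact ⟨⟨f, hf, hfx⟩⟩
  refine IsCompact.nonempty_iInter_of_directed_nonempty_isCompact_isClosed _ ?_ ?_ ?_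
    fun _ => isClosed_closure
  · rintro ⟨f, hf, hfx⟩ ⟨g, hg, hgx⟩
    obtain ⟨k, hk, hkU, hkx⟩ := hΓ.core_rich ({x : ℝ | f • x = x}ᶜ ∩ {x : ℝ | g • x = x}ᶜ)
      ((hΓ.isClosed_fix _).isOpen_compl.inter (hΓ.isClosed_fix _).isOpen_compl) x ⟨hfx, hgx⟩
    exact ⟨⟨k, hk, hkx⟩, hΓ.closure_supp_subset α fun y hy => hkU y fun h => h.1 hy,
      hΓ.closure_supp_subset α fun y hy => hkU y fun h => h.2 hy⟩
  · rintro ⟨f, hf, hfx⟩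
    refine Set.Nonempty.closure ?_
    by_contra h
    have h1 : α f = 1 := hΓ.faithful _ fun z => by
      by_contra hz
      exact h ⟨z, hz⟩
    rw [MulEquiv.map_eq_one_iff] at h1
    exact hfx (by rw [h1, one_smul])
  · rintro ⟨f, hf, hfx⟩
    obtain ⟨K, hK, hKf⟩ := hΓ.core_bd (map_core α hf)
    refine hK.of_isClosed_subset isClosed_closure (closure_minimal (fun z hz => ?_) hK.isClosed)
    by_contra h
    exact hz (hKf z h)

/-- If `α j` is the identity near a point of the fiber of `x`, then `j` fixes `x`: otherwise some `f`
in the core moves `x` and has support disjoint from that of its conjugate by `j`. -/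
theorem fix_of_germ (α : MulAut Γ) {x y : ℝ} (hy : y ∈ fiber α x) {j : Γ} {O : Set ℝ}
    (hO : IsOpen O) (hyO : y ∈ O) (hj : ∀ z ∈ O, α j • z = z) : j • x = x := by
  by_contra hne
  obtain ⟨V, W, hV, hW, hxV, hxW, hVW⟩ := t2_separation hne
  obtain ⟨f, hf, hfU, hfx⟩ := hΓ.core_rich ((fun x : ℝ => j • x) ⁻¹' V ∩ W)
    ((hV.preimage (hΓ.cont j)).inter hW) x ⟨hxV, hxW⟩
  have hdis : ∀ z : ℝ, f • z = z ∨ (j * f * j⁻¹) • z = z := by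
    intro z
    by_cases hz : z ∈ W
    · right
      rw [fix_conj]
      refine hfU _ fun h => Set.disjoint_left.1 hVW h.1 ?_
      rwa [← smul_inv_smul j z] at hz
    · exact .inl (hfU z fun h => hz h.2)
  obtain ⟨z, hzO, hz⟩ := mem_closure_iff.1 (Set.mem_iInter.1 hy ⟨f, hf, hfx⟩) O hO hyO
  have h1 := (hΓ.map_disj α hf hdis z).resolve_left hz
  rw [map_mul, map_mul, map_inv, fix_conj, fix_inv (hj z hzO)] at h1
  exact hz h1

/-- The elements of the core trivial near `y` and those trivial near `y'` together generate the core
when `y < y'`, so such points cannot lie in a common fiber. -/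
theorem fiber_not_lt (α : MulAut Γ) {x y y' : ℝ} (hy : y ∈ fiber α x) (hy' : y' ∈ fiber α x) :
    ¬ y < y' := by
  intro hlt
  obtain ⟨f, hf, -, hfx⟩ := hΓ.core_rich Set.univ isOpen_univ x trivial
  obtain ⟨M, -, hM⟩ := (hΓ.core_bd (map_core α hf)).bound
  obtain ⟨b, hyb, hby⟩ := exists_between hlt
  obtain ⟨c, hbc, hcy⟩ := exists_between hby
  -- `s` is trivial near `y`, and the conjugate of `α f` by `s` is trivial near `y'`.
  obtain ⟨s, hs, hsb, hsM⟩ := hΓ.core_push (M := M) hbc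
  have h1 : α.symm s • x = x := hΓ.fix_of_germ α hy isOpen_Iio (show y ∈ Set.Iio b from hyb)
    fun z hz => by rw [MulEquiv.apply_symm_apply]; exact hsb z (le_of_lt hz)
  have h2 : (α.symm s * f * (α.symm s)⁻¹) • x = x :=
    hΓ.fix_of_germ α hy' isOpen_Ioi (show y' ∈ Set.Ioi c from hcy) fun z hz => by
      rw [map_mul, map_mul, map_inv, MulEquiv.apply_symm_apply, fix_conj]
      apply hM
      have h3 : s⁻¹ • s • M < s⁻¹ • z := hΓ.bd_mono (hΓ.core_bd hs).inv (hsM.trans hz)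
      rw [inv_smul_smul] at h3
      exact h3.trans_le (le_abs_self _)
  rw [fix_conj, fix_inv h1] at h2
  exact hfx h2

theorem fiber_eq (α : MulAut Γ) {x y y' : ℝ} (hy : y ∈ fiber α x) (hy' : y' ∈ fiber α x) :
    y = y' :=
  le_antisymm (not_lt.1 (hΓ.fiber_not_lt α hy' hy)) (not_lt.1 (hΓ.fiber_not_lt α hy hy'))

theorem smul_mem_fiber (α : MulAut Γ) {x y : ℝ} (hy : y ∈ fiber α x) (j : Γ) :
    α j • y ∈ fiber α (j • x) := by
  refine Set.mem_iInter.2 fun ⟨f, hf, hfx⟩ => ?_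
  have h1 : (j⁻¹ * f * j) • x ≠ x := by
    intro h
    have := fix_conj (k := j⁻¹) (f := f) (x := x)
    rw [inv_inv] at this
    exact hfx (this.1 h)
  have h2 : j⁻¹ * f * j ∈ core Γ := by simpa using conj_core hf j⁻¹
  have h3 := Set.mem_iInter.1 hy ⟨_, h2, h1⟩
  have h4 := image_closure_subset_closure_image (hΓ.cont (α j)) ⟨y, h3, rfl⟩
  refine closure_mono ?_ h4
  rintro _ ⟨z, hz, rfl⟩ h5
  apply hz
  simp only [map_mul, map_inv, mul_smul] at h5 ⊢
  rw [h5, inv_smul_smul]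

/-- Only the identity map, continuous or not, commutes with the action. -/
theorem eq_of_equivariant {p : ℝ → ℝ} (hp : ∀ (g : Γ) (x : ℝ), p (g • x) = g • p x) (x : ℝ) :
    p x = x := by
  by_contra h
  obtain ⟨f, -, hfU, hf⟩ := hΓ.rich {x}ᶜ isOpen_compl_singleton (p x) h
  apply hf
  rw [← hp, hfU x fun h => h rfl]

theorem continuous_of_equivariant {h k : ℝ → ℝ} (hkh : ∀ x, k (h x) = x)
    (α : MulAut Γ) (hh : ∀ (g : Γ) (x : ℝ), h (g • x) = α g • h x) : Continuous h := by
  -- preimages under `h` of the basic open sets `supp g` are the supports of `α⁻¹ g`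
  rw [continuous_iff_continuousAt]
  intro x U hU
  obtain ⟨V, hVU, hV, hxV⟩ := mem_nhds_iff.1 hU
  obtain ⟨f, -, hfV, hf⟩ := hΓ.rich V hV (h x) hxV
  have hiff : ∀ y, f • h y = h y ↔ α.symm f • y = y := by
    intro y
    have h1 := hh (α.symm f) y
    rw [MulEquiv.apply_symm_apply] at h1
    rw [← h1]
    exact ⟨fun h2 => by rw [← hkh (α.symm f • y), h2, hkh], fun h2 => by rw [h2]⟩
  refine mem_map.2 (mem_of_superset ((hΓ.isClosed_fix (α.symm f)).isOpen_compl.mem_nhds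
    (fun h2 => hf ((hiff x).2 h2))) fun y hy => hVU ?_)
  by_contra h3
  exact hy ((hiff y).1 (hfV _ h3))

/-- Every automorphism of `Γ` is conjugation by a homeomorphism of the line. -/
theorem exists_homeo (α : MulAut Γ) :
    ∃ h : ℝ ≃ₜ ℝ, ∀ (g : Γ) (x : ℝ), h (g • x) = α g • h x := by
  have key : ∀ α : MulAut Γ, ∃ h : ℝ → ℝ, ∀ (g : Γ) (x : ℝ), h (g • x) = α g • h x := by
    intro α
    choose h hh using hΓ.fiber_nonempty α
    exact ⟨h, fun g x => hΓ.fiber_eq α (hh _) (hΓ.smul_mem_fiber α (hh x) g)⟩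
  obtain ⟨h, hh⟩ := key α
  obtain ⟨k, hk⟩ := key α.symm
  have hkh : ∀ x, k (h x) = x := hΓ.eq_of_equivariant (p := fun x => k (h x)) fun g x => by
    rw [hh, hk, MulEquiv.symm_apply_apply]
  have hhk : ∀ x, h (k x) = x := hΓ.eq_of_equivariant (p := fun x => h (k x)) fun g x => by
    rw [hk, hh, MulEquiv.apply_symm_apply]
  exact ⟨⟨⟨h, k, hkh, hhk⟩, hΓ.continuous_of_equivariant hkh α hh,
    hΓ.continuous_of_equivariant hhk α.symm hk⟩, hh⟩

end GoodAction
end Action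

/-! ### Bumps in `BPLₙ(ℝ)` -/

theorem zp_mul {n : ℕ} (hn : 2 ≤ n) {x y : ℝ} (hx : x ∈ zpows n) (hy : y ∈ zpows n) :
    x * y ∈ zpows n := by
  obtain ⟨a, b, rfl⟩ := hx
  obtain ⟨c, d, rfl⟩ := hy
  have h0 : (n : ℝ) ≠ 0 := by positivity
  refine ⟨a * c, b + d, ?_⟩
  rw [zpow_add₀ h0]
  push_cast
  ring

theorem zp_add {n : ℕ} (hn : 2 ≤ n) {x y : ℝ} (hx : x ∈ zpows n) (hy : y ∈ zpows n) :
    x + y ∈ zpows n := by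
  obtain ⟨a, b, rfl⟩ := hx
  obtain ⟨c, d, rfl⟩ := hy
  have h0 : (n : ℝ) ≠ 0 := by positivity
  have key : ∀ e : ℤ, min b d ≤ e → (n : ℝ) ^ e = n ^ (e - min b d).toNat * (n : ℝ) ^ min b d := by
    intro e he
    rw [← zpow_natCast, ← zpow_add₀ h0, Int.toNat_of_nonneg (by lia)]
    congr 1
    ring
  refine ⟨a * n ^ (b - min b d).toNat + c * n ^ (d - min b d).toNat, min b d, ?_⟩
  rw [key b (min_le_left _ _), key d (min_le_right _ _)]
  push_cast
  ring

theorem zp_int (n : ℕ) (a : ℤ) : (a : ℝ) ∈ zpows n := ⟨a, 0, by simp⟩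

theorem zp_zpow (n : ℕ) (k : ℤ) : (n : ℝ) ^ k ∈ zpows n := ⟨1, k, by simp⟩

theorem zp_sub {n : ℕ} (hn : 2 ≤ n) {x y : ℝ} (hx : x ∈ zpows n) (hy : y ∈ zpows n) :
    x - y ∈ zpows n := by
  have := zp_add hn hx (zp_mul hn (zp_int n (-1)) hy)
  convert this using 1
  push_cast
  ring

theorem zp_dense {n : ℕ} (hn : 2 ≤ n) {a b : ℝ} (hab : a < b) : ∃ q ∈ zpows n, a < q ∧ q < b := by
  have h1 : (1 : ℝ) < n := by exact_mod_cast hn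
  obtain ⟨k, hk⟩ := pow_unbounded_of_one_lt (1 / (b - a)) h1
  have hpos : (0 : ℝ) < (n : ℝ) ^ k := by positivity
  refine ⟨(⌊a * n ^ k⌋ + 1 : ℤ) * (n : ℝ) ^ (-(k : ℤ)), ⟨_, _, rfl⟩, ?_, ?_⟩
  · rw [zpow_neg, zpow_natCast, ← div_eq_mul_inv, lt_div_iff₀ hpos]
    push_cast
    exact Int.lt_floor_add_one _
  · rw [zpow_neg, zpow_natCast, ← div_eq_mul_inv, div_lt_iff₀ hpos]
    rw [div_lt_iff₀ (by linarith)] at hk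
    push_cast
    have := Int.floor_le (a * (n : ℝ) ^ k)
    nlinarith

/-- The map which is the identity off `(p, p + (n + 1) e)`, has slope `n` on `[p, p + e]` and slope
`1 / n` on `[p + e, p + (n + 1) e]`. For `e > 0` it moves every point of the open interval to the
right. -/
def bump (n : ℕ) (p e : ℝ) (x : ℝ) : ℝ :=
  max x (min (p + n * (x - p)) (p + (x - p) / n + (n - 1 / n) * e))

section bump

variable {n : ℕ} (hn : 2 ≤ n) {p e x : ℝ}
include hn

theorem bump_le (h : x ≤ p) : bump n p e x = x := by
  have h1 : (2 : ℝ) ≤ n := by exact_mod_cast hn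
  refine max_eq_left (min_le_of_left_le ?_)
  nlinarith

theorem bump_ge (h : p + (n + 1) * e ≤ x) : bump n p e x = x := by
  have h1 : (2 : ℝ) ≤ n := by exact_mod_cast hn
  refine max_eq_left (min_le_of_right_le ?_)
  have h2 : (n : ℝ) ≠ 0 := by positivity
  have h3 : x - (p + (x - p) / n + (n - 1 / n) * e)
      = (n - 1) / n * (x - (p + (n + 1) * e)) := by field_simp; ring
  have h4 : 0 ≤ (n - 1) / n * (x - (p + (n + 1) * e)) :=
    mul_nonneg (div_nonneg (by linarith) (by linarith)) (by linarith)
  linarith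

theorem bump_left (h : p ≤ x) (h' : x ≤ p + e) : bump n p e x = p + n * (x - p) := by
  have h1 : (2 : ℝ) ≤ n := by exact_mod_cast hn
  have h2 : (n : ℝ) ≠ 0 := by positivity
  have h3 : p + (x - p) / n + (n - 1 / n) * e - (p + n * (x - p))
      = (n - 1) * (n + 1) / n * (p + e - x) := by field_simp; ring
  have h4 : 0 ≤ ((n : ℝ) - 1) * (n + 1) / n * (p + e - x) :=
    mul_nonneg (div_nonneg (mul_nonneg (by linarith) (by linarith)) (by linarith)) (by linarith)
  rw [bump, min_eq_left (by linarith), max_eq_right (by nlinarith)]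

theorem bump_right (h : p + e ≤ x) (h' : x ≤ p + (n + 1) * e) :
    bump n p e x = p + (x - p) / n + (n - 1 / n) * e := by
  have h1 : (2 : ℝ) ≤ n := by exact_mod_cast hn
  have h2 : (n : ℝ) ≠ 0 := by positivity
  have h3 : (p + n * (x - p)) - (p + (x - p) / n + (n - 1 / n) * e)
      = (n - 1) * (n + 1) / n * (x - (p + e)) := by field_simp; ring
  have h4 : 0 ≤ ((n : ℝ) - 1) * (n + 1) / n * (x - (p + e)) :=
    mul_nonneg (div_nonneg (mul_nonneg (by linarith) (by linarith)) (by linarith)) (by linarith)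
  have h5 : (p + (x - p) / n + (n - 1 / n) * e) - x
      = (n - 1) / n * ((p + (n + 1) * e) - x) := by field_simp; ring
  have h6 : 0 ≤ (n - 1) / n * ((p + (n + 1) * e) - x) :=
    mul_nonneg (div_nonneg (by linarith) (by linarith)) (by linarith)
  rw [bump, min_eq_right (by linarith), max_eq_right (by linarith)]

theorem lt_bump (h : p < x) (h' : x < p + (n + 1) * e) : x < bump n p e x := by
  have h1 : (2 : ℝ) ≤ n := by exact_mod_cast hn
  have h2 : (n : ℝ) ≠ 0 := by positivity
  have h5 : (p + (x - p) / n + (n - 1 / n) * e) - x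
      = (n - 1) / n * ((p + (n + 1) * e) - x) := by field_simp; ring
  have h6 : 0 < (n - 1) / n * ((p + (n + 1) * e) - x) :=
    mul_pos (div_pos (by linarith) (by linarith)) (by linarith)
  refine lt_max_of_lt_right (lt_min ?_ (by linarith))
  nlinarith

theorem bump_strictMono : StrictMono (bump n p e) := by
  have h1 : (0 : ℝ) < n := by positivity
  intro x y hxy
  refine max_lt_max hxy (min_lt_min ?_ ?_)
  · have := mul_lt_mul_of_pos_left hxy h1
    linarith
  · have := div_lt_div_of_pos_right hxy h1
    simp only [sub_div]
    linarith

theorem bump_surjective : Function.Surjective (bump n p e) := by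
  have hc : Continuous (bump n p e) := by unfold bump; fun_prop
  refine hc.surjective (tendsto_atTop_mono (fun x => le_max_left _ _) tendsto_id)
    (tendsto_id.congr' ?_)
  filter_upwards [eventually_le_atBot p] with x hx
  exact (bump_le hn hx).symm

theorem bump_memBPL (he : 0 < e) (hp : p ∈ zpows n) (hez : e ∈ zpows n) : MemBPL n (bump n p e) := by
  have h1 : (2 : ℝ) ≤ n := by exact_mod_cast hn
  have hnz : (n : ℝ) ∈ zpows n := by simpa using zp_zpow n 1
  have hnz' : 1 / (n : ℝ) ∈ zpows n := by simpa using zp_zpow n (-1)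
  have hee : e < (n + 1) * e := by nlinarith
  refine ⟨⟨bump_strictMono hn, bump_surjective hn,
    ⟨{p, p + e, p + (n + 1) * e}, ?_, ?_, ?_⟩, ?_⟩, |p| + |p + (n + 1) * e|, ?_⟩
  · rintro x (rfl | rfl | rfl)
    · exact hp
    · exact zp_add hn hp hez
    · have h2 : (1 : ℝ) ∈ zpows n := by simpa using zp_int n 1
      exact zp_add hn hp (zp_mul hn (zp_add hn hnz h2) hez)
  · intro x
    have hfin : (({p, p + e, p + (n + 1) * e} : Set ℝ) \ {x}).Finite :=
      (Set.toFinite _).subset Set.sdiff_subset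
    obtain ⟨ε, hε, h⟩ := Metric.mem_nhds_iff.1
      (hfin.isClosed.isOpen_compl.mem_nhds (show x ∈ (_ \ {x})ᶜ from fun h => h.2 rfl))
    refine ⟨ε, hε, fun y hy hyx => ?_⟩
    by_contra hne
    exact h (show dist y x < ε from hyx) ⟨hy, hne⟩
  · intro x hx
    simp only [Set.mem_insert_iff, Set.mem_singleton_iff, not_or] at hx
    obtain ⟨hx1, hx2, hx3⟩ := hx
    have key : ∀ (k : ℤ) (c : ℝ), (∀ᶠ y in 𝓝 x, bump n p e y = (n : ℝ) ^ k * y + c) →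
        ∃ (k : ℤ) (c : ℝ), ∃ ε > 0, ∀ y : ℝ, |y - x| < ε → bump n p e y = (n : ℝ) ^ k * y + c := by
      intro k c h
      obtain ⟨ε, hε, h⟩ := Metric.eventually_nhds_iff.1 h
      exact ⟨k, c, ε, hε, fun y hy => h hy⟩
    rcases lt_or_gt_of_ne hx1 with h | h
    · refine key 0 0 ?_
      filter_upwards [gt_mem_nhds h] with y hy
      rw [bump_le hn hy.le]
      simp
    rcases lt_or_gt_of_ne hx2 with h' | h'
    · refine key 1 (p - n * p) ?_
      filter_upwards [lt_mem_nhds h, gt_mem_nhds h'] with y hy hy'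
      rw [bump_left hn hy.le hy'.le, zpow_one]
      ring
    rcases lt_or_gt_of_ne hx3 with h'' | h''
    · refine key (-1) (p - p / n + (n - 1 / n) * e) ?_
      filter_upwards [lt_mem_nhds h', gt_mem_nhds h''] with y hy hy'
      rw [bump_right hn hy.le hy'.le, zpow_neg_one]
      ring
    · refine key 0 0 ?_
      filter_upwards [lt_mem_nhds h''] with y hy
      rw [bump_ge hn hy.le]
      simp
  · intro q hq
    have h2 := zp_sub hn hq hp
    have h3 : p + n * (q - p) ∈ zpows n := zp_add hn hp (zp_mul hn hnz h2)
    have h4 : p + (q - p) / n + (n - 1 / n) * e ∈ zpows n := by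
      rw [div_eq_mul_one_div]
      exact zp_add hn (zp_add hn hp (zp_mul hn h2 hnz'))
        (zp_mul hn (zp_sub hn hnz hnz') hez)
    unfold bump
    rcases max_choice q (min (p + n * (q - p)) (p + (q - p) / n + (n - 1 / n) * e)) with h | h
    · rwa [h]
    · rw [h]
      rcases min_choice (p + n * (q - p)) (p + (q - p) / n + (n - 1 / n) * e) with h | h <;> rwa [h]
  · intro x hx
    rcases le_or_gt 0 x with h | h
    · rw [abs_of_nonneg h] at hx
      refine bump_ge hn ?_
      have := le_abs_self (p + (n + 1) * e)
      have := abs_nonneg p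
      linarith
    · rw [abs_of_neg h] at hx
      refine bump_le hn ?_
      have := neg_abs_le p
      have := abs_nonneg (p + (n + 1) * e)
      linarith

end bump

theorem exists_zpow_gt {n : ℕ} (hn : 2 ≤ n) (C : ℝ) : ∃ k : ℤ, C < (n + 1) * (n : ℝ) ^ k := by
  have h1 : (2 : ℝ) ≤ n := by exact_mod_cast hn
  obtain ⟨k, hk⟩ := pow_unbounded_of_one_lt C (show (1 : ℝ) < n by linarith)
  refine ⟨k, hk.trans ?_⟩
  rw [zpow_natCast]
  have : (0 : ℝ) < (n : ℝ) ^ k := by positivity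
  nlinarith

theorem exists_zpow_lt {n : ℕ} (hn : 2 ≤ n) {C : ℝ} (hC : 0 < C) :
    ∃ k : ℤ, (n + 1) * (n : ℝ) ^ k < C := by
  have h1 : (2 : ℝ) ≤ n := by exact_mod_cast hn
  obtain ⟨k, hk⟩ := pow_unbounded_of_one_lt ((n + 1) / C) (show (1 : ℝ) < n by linarith)
  have h2 : (0 : ℝ) < (n : ℝ) ^ k := by positivity
  refine ⟨-k, ?_⟩
  rw [zpow_neg, zpow_natCast, ← div_eq_mul_inv, div_lt_iff₀ h2]
  rw [div_lt_iff₀ hC] at hk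
  linarith

/-! ### Groups between `BPLₙ(ℝ)` and `P̃Lₙ(ℝ)` -/

/-- A function that is affine near every point of an open interval is affine on the interval. -/
theorem affine_of_locally {f : ℝ → ℝ} {l r : ℝ}
    (h : ∀ x ∈ Set.Ioo l r, ∃ s c : ℝ, ∀ᶠ y in 𝓝 x, f y = s * y + c) :
    ∃ s c : ℝ, ∀ y ∈ Set.Ioo l r, f y = s * y + c := by
  have hd : ∀ s c x : ℝ, HasDerivAt (fun y => s * y + c) s x := fun s c x => by
    simpa using ((hasDerivAt_id x).const_mul s).add_const c
  have h1 : ∀ x ∈ Set.Ioo l r, ∃ s, HasDerivAt f s x ∧ HasDerivAt (deriv f) 0 x := by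
    intro x hx
    obtain ⟨s, c, hsc⟩ := h x hx
    refine ⟨s, (hd s c x).congr_of_eventuallyEq hsc, ?_⟩
    refine (hasDerivAt_const x s).congr_of_eventuallyEq ?_
    filter_upwards [hsc.eventually_nhds] with y hy
    exact ((hd s c y).congr_of_eventuallyEq hy).deriv
  obtain ⟨s, hs⟩ := isOpen_Ioo.exists_is_const_of_deriv_eq_zero isPreconnected_Ioo
    (f := deriv f) (fun x hx => (h1 x hx).choose_spec.2.differentiableAt.differentiableWithinAt)
    (fun x hx => (h1 x hx).choose_spec.2.deriv)
  have h2 : ∀ x ∈ Set.Ioo l r, HasDerivAt (fun y => f y - s * y) 0 x := by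
    intro x hx
    obtain ⟨t, ht, -⟩ := h1 x hx
    have : t = s := by rw [← hs x hx, ht.deriv]
    subst this
    have h3 := ht.sub ((hasDerivAt_id x).const_mul t)
    rw [mul_one, sub_self] at h3
    exact h3
  obtain ⟨c, hc⟩ := isOpen_Ioo.exists_is_const_of_deriv_eq_zero isPreconnected_Ioo
    (f := fun y => f y - s * y) (fun x hx => (h2 x hx).differentiableAt.differentiableWithinAt)
    (fun x hx => (h2 x hx).deriv)
  exact ⟨s, c, fun y hy => by have : f y - s * y = c := hc y hy; linarith⟩

/-- An element of `P̃Lₙ(ℝ)` is affine on a one-sided neighbourhood of `a` on either side. -/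
theorem germs {n : ℕ} {f : ℝ → ℝ} (hf : MemPLt n f) (a : ℝ) :
    ∃ ε > 0, (∃ s c : ℝ, ∀ y ∈ Set.Ioo a (a + ε), f y = s * y + c) ∧
      ∃ s c : ℝ, ∀ y ∈ Set.Ioo (a - ε) a, f y = s * y + c := by
  obtain ⟨-, -, ⟨B, -, hB, hloc⟩, -⟩ := hf
  have hloc' : ∀ x ∉ B, ∃ s c : ℝ, ∀ᶠ y in 𝓝 x, f y = s * y + c := by
    intro x hx
    obtain ⟨-, s, c, -, ε, hε, h⟩ := hloc x hx
    exact ⟨s, c, Metric.eventually_nhds_iff.2 ⟨ε, hε, fun y hy => h y hy⟩⟩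
  obtain ⟨ε, hε, h⟩ := hB a
  refine ⟨ε, hε, affine_of_locally fun x hx => hloc' x fun hxB => ?_,
    affine_of_locally fun x hx => hloc' x fun hxB => ?_⟩
  · exact hx.1.ne' (h x hxB (by rw [abs_of_pos] <;> linarith [hx.1, hx.2]))
  · exact hx.2.ne (h x hxB (by rw [abs_of_neg] <;> linarith [hx.1, hx.2]))

theorem continuous_of_memPLt {n : ℕ} {f : ℝ → ℝ} (hf : MemPLt n f) : Continuous f := by
  obtain ⟨h | h, hs, -⟩ := hf
  · exact h.monotone.continuous_of_surjective hs
  · have h1 : Continuous fun x : ℝ => -f x :=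
      Monotone.continuous_of_surjective (fun x y hxy => neg_le_neg (h.antitone hxy))
        (fun y => by obtain ⟨x, hx⟩ := hs (-y); exact ⟨x, by simp [hx]⟩)
    exact h1.neg.congr fun x => neg_neg _

section Group

variable {n : ℕ} (hn : 2 ≤ n) {G : Subgroup (Equiv.Perm ℝ)}
  (hB : ∀ f : Equiv.Perm ℝ, MemBPL n ⇑f → f ∈ G)
include hn hB

/-- A bump as an element of `G`. -/
theorem exists_bump {p : ℝ} (hp : p ∈ zpows n) (k : ℤ) :
    ∃ f : G, Bd f ∧ StrictMono (fun x : ℝ => f • x) ∧ (Continuous fun x : ℝ => f • x) ∧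
      (∀ x : ℝ, x ≤ p → f • x = x) ∧ (∀ x : ℝ, p + (n + 1) * (n : ℝ) ^ k ≤ x → f • x = x) ∧
      ∀ x : ℝ, p < x → x < p + (n + 1) * (n : ℝ) ^ k → x < f • x := by
  have he : (0 : ℝ) < (n : ℝ) ^ k := by positivity
  let F : Equiv.Perm ℝ := Equiv.ofBijective (bump n p (n ^ k))
    ⟨(bump_strictMono hn).injective, bump_surjective hn⟩
  have hF : ∀ x, F x = bump n p (n ^ k) x := fun x => rfl
  have hmem := bump_memBPL hn he hp (zp_zpow n k)
  refine ⟨⟨F, hB F hmem⟩, ?_, bump_strictMono hn, ?_, fun x hx => bump_le hn hx,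
    fun x hx => bump_ge hn hx, fun x hx hx' => lt_bump hn hx hx'⟩
  · refine ⟨Set.Icc p (p + (n + 1) * (n : ℝ) ^ k), isCompact_Icc, fun x hx => ?_⟩
    rcases lt_or_ge x p with h | h
    · exact bump_le hn h.le
    · exact bump_ge hn (not_lt.1 fun h' => hx ⟨h, h'.le⟩)
  · exact (bump_strictMono hn).monotone.continuous_of_surjective (bump_surjective hn)

theorem exists_push {p : ℝ} (hp : p ∈ zpows n) (k : ℤ) {u v : ℝ} (hu : p < u)
    (hv : v < p + (n + 1) * (n : ℝ) ^ k) :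
    ∃ f : G, Bd f ∧ (∀ x : ℝ, x ≤ p → f • x = x) ∧
      (∀ x : ℝ, p + (n + 1) * (n : ℝ) ^ k ≤ x → f • x = x) ∧ v < f • u := by
  obtain ⟨f, hf, hm, hc, h1, h2, h3⟩ := exists_bump hn hB hp k
  have hle : u ≤ f • u := by
    rcases lt_or_ge u (p + (n + 1) * (n : ℝ) ^ k) with h | h
    · exact (h3 u hu h).le
    · exact (h2 u h).ge
  obtain ⟨m, hmv⟩ := exists_iterate_gt hc hm.monotone hle (v := v)
    fun y hy hy' => (h3 y (hu.trans_le hy) (hy'.trans_lt hv)).ne'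
  rw [smul_iterate_apply] at hmv
  have hfix : ∀ {x : ℝ}, f • x = x → f ^ m • x = x := fun {x} hx => by
    rw [← smul_iterate_apply]
    exact Function.iterate_fixed hx m
  obtain ⟨K, hK, hfK⟩ := hf
  exact ⟨f ^ m, ⟨K, hK, fun x hx => hfix (hfK x hx)⟩, fun x hx => hfix (h1 x hx),
    fun x hx => hfix (h2 x hx), hmv⟩

theorem goodAction (hP : ∀ f : Equiv.Perm ℝ, f ∈ G → MemPLt n ⇑f) : GoodAction G where
  faithful g h := Subtype.ext (Equiv.ext h)
  mono g := (hP g.1 g.2).1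
  right g a := by
    obtain ⟨ε, hε, ⟨s, c, h⟩, -⟩ := germs (hP g.1 g.2) a
    have ha : g.1 a = s * a + c := by
      have h1 : Tendsto g.1 (𝓝[>] a) (𝓝 (g.1 a)) :=
        (continuous_of_memPLt (hP g.1 g.2)).continuousAt.tendsto.mono_left nhdsWithin_le_nhds
      have h2 : Tendsto (fun y => s * y + c) (𝓝[>] a) (𝓝 (s * a + c)) :=
        (Continuous.tendsto (by fun_prop) a).mono_left nhdsWithin_le_nhds
      refine tendsto_nhds_unique h1 (h2.congr' ?_)
      filter_upwards [Ioo_mem_nhdsGT (show a < a + ε by linarith)] with y hy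
      exact (h y hy).symm
    refine ⟨ε, hε, s, fun y hy hy' => ?_⟩
    change g.1 y = g.1 a + s * (y - a)
    rcases hy.eq_or_lt with rfl | hy
    · ring
    · rw [h y ⟨hy, hy'⟩, ha]
      ring
  left g a := by
    obtain ⟨ε, hε, -, s, c, h⟩ := germs (hP g.1 g.2) a
    exact ⟨ε, hε, s, c, fun y hy hy' => h y ⟨hy, hy'⟩⟩
  rich U hU u hu := by
    obtain ⟨l, r, ⟨hl, hr⟩, hlr⟩ := mem_nhds_iff_exists_Ioo_subset.1 (hU.mem_nhds hu)
    obtain ⟨k, hk⟩ := exists_zpow_lt hn (C := min (u - l) (r - u))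
      (lt_min (by linarith) (by linarith))
    have h1 := min_le_left (u - l) (r - u)
    have h2 := min_le_right (u - l) (r - u)
    have h3 : (0 : ℝ) < (n + 1) * (n : ℝ) ^ k := by positivity
    obtain ⟨p, hp, hp1, hp2⟩ := zp_dense hn (show u - (n + 1) * (n : ℝ) ^ k < u by linarith)
    obtain ⟨f, hf, -, -, hf1, hf2, hf3⟩ := exists_bump hn hB hp k
    refine ⟨f, hf, fun x hx => ?_, (hf3 u hp2 (by linarith)).ne'⟩
    by_contra hne
    refine hx (hlr ⟨?_, ?_⟩)
    · by_contra! h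
      exact hne (hf1 x (by linarith))
    · by_contra! h
      exact hne (hf2 x (by linarith))
  pushR y u v hyu := by
    obtain ⟨p, hp, hp1, hp2⟩ := zp_dense hn hyu
    obtain ⟨k, hk⟩ := exists_zpow_gt hn (v - p)
    obtain ⟨f, hf, hf1, -, hf3⟩ := exists_push hn hB hp k hp2 (v := v) (by linarith)
    exact ⟨f, hf, fun x hx => hf1 x (by linarith), hf3⟩
  pushL u v z hvz := by
    obtain ⟨q, hq, hq1, hq2⟩ := zp_dense hn hvz
    obtain ⟨k, hk⟩ := exists_zpow_gt hn (q - u)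
    have h1 : (n : ℝ) + 1 ∈ zpows n := by simpa using zp_int n (n + 1)
    have hp := zp_sub hn hq (zp_mul hn h1 (zp_zpow n k))
    obtain ⟨f, hf, -, hf2, hf3⟩ := exists_push hn hB hp k (u := u) (v := v) (by linarith)
      (by linarith)
    exact ⟨f, hf, fun x hx => hf2 x (by linarith), hf3⟩

end Group

end PLAut

/-- For any group `G` with `BPLₙ(ℝ) ⊆ G ⊆ P̃Lₙ(ℝ)`, every automorphism
`α` of `G` is realized by a unique homeomorphism `h` of `ℝ` via `α(f) = h ∘ f ∘ h⁻¹`;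
consequently `Φ : N(G) → Aut(G)`, `Φ(h)(f) = h f h⁻¹`, is a group isomorphism
(injective and surjective). -/
theorem stmt_9 (n : ℕ) (hn : 2 ≤ n) (G : Subgroup (Equiv.Perm ℝ))
    (hB : ∀ f : Equiv.Perm ℝ, MemBPL n ⇑f → f ∈ G)
    (hP : ∀ f : Equiv.Perm ℝ, f ∈ G → MemPLt n ⇑f) :
    (∀ α : MulAut ↥G, ∃! h : ℝ → ℝ, IsHomeomorph h ∧
      ∀ (f : ↥G) (x : ℝ), ((α f : ↥G) : Equiv.Perm ℝ) (h x) = h ((f : Equiv.Perm ℝ) x)) ∧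
    (∀ h₁ h₂ : Equiv.Perm ℝ, h₁ ∈ NormSet G → h₂ ∈ NormSet G →
      (∀ f : Equiv.Perm ℝ, f ∈ G → h₁ * f * h₁⁻¹ = h₂ * f * h₂⁻¹) → h₁ = h₂) ∧
    (∀ α : MulAut ↥G, ∃ h ∈ NormSet G, ∀ f : ↥G,
      ((α f : ↥G) : Equiv.Perm ℝ) = h * (f : Equiv.Perm ℝ) * h⁻¹) := by
  have hΓ := PLAut.goodAction hn hB hP
  have huniq : ∀ (α : MulAut ↥G) (h : ℝ ≃ₜ ℝ) (k : ℝ → ℝ),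
      (∀ (g : G) (x : ℝ), h (g • x) = α g • h x) → (∀ (g : G) (x : ℝ), α g • k x = k (g • x)) →
      k = h := by
    intro α h k hh hk
    funext x
    have h1 := hΓ.eq_of_equivariant (p := fun x => h.symm (k x)) (fun g x => by
      rw [h.symm_apply_eq, hh, h.apply_symm_apply, hk]) x
    rwa [h.symm_apply_eq] at h1
  refine ⟨fun α => ?_, fun h₁ h₂ _ _ h => ?_, fun α => ?_⟩
  · obtain ⟨h, hh⟩ := hΓ.exists_homeo α
    exact ⟨h, ⟨h.isHomeomorph, fun f x => (hh f x).symm⟩, fun k hk => huniq α h k hh hk.2⟩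
  · ext x
    have h1 := hΓ.eq_of_equivariant (p := fun x => h₂.symm (h₁ x)) (fun g x => ?_) x
    · rwa [h₂.symm_apply_eq] at h1
    · have h2 : h₁ (g.1 (h₁.symm (h₁ x))) = h₂ (g.1 (h₂.symm (h₁ x))) :=
        Equiv.congr_fun (h g.1 g.2) (h₁ x)
      rw [h₁.symm_apply_apply] at h2
      exact (h₂.symm_apply_eq).2 h2
  · obtain ⟨h, hh⟩ := hΓ.exists_homeo α
    have hconj : ∀ f : G, (α f : Equiv.Perm ℝ) = h.toEquiv * (f : Equiv.Perm ℝ) * h.toEquiv⁻¹ := by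
      intro f
      ext x
      have h1 := hh f (h.symm x)
      rw [h.apply_symm_apply] at h1
      exact h1.symm
    refine ⟨h.toEquiv, ⟨h.continuous, h.symm.continuous, fun f => ⟨fun hf => ?_, fun hf => ?_⟩⟩,
      hconj⟩
    · rw [← hconj ⟨f, hf⟩]
      exact (α ⟨f, hf⟩).2
    · have h1 := hconj (α.symm ⟨_, hf⟩)
      rw [MulEquiv.apply_symm_apply] at h1
      have h2 : f = (α.symm ⟨_, hf⟩ : G).1 := mul_left_cancel (mul_right_cancel h1)
      rw [h2]
      exact (α.symm ⟨_, hf⟩ : G).2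
end
end
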